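/- (Vector-valued mixed weak-type inequality for I_α) Let 0<α<mn and q = n/(mn−α). Let u_1,…,u_m and v be weights on ℝ^n, write u⃗^{mq} = (u_1^{mq},…,u_m^{mq}) and ν = ∏_{i=1}^m u_i^q, and suppose either u⃗^{mq} ∈ A_{(1,…,1)} and ν v^q ∈ A_∞, or u_1^{mq},…,u_m^{mq} ∈ A_1 and v^{mq} ∈ A_∞. Let r satisfy either q<r<2 and 1<r<2, or r=2. Set S(f⃗) = I_α(f⃗)/v. Then for countable families {f^i_{k_i}}_{k_i} ⊂ L^1(u_i), i=1,…,m, there exists a constant C>0 such that ‖(Σ_{k_1,…,k_m} |S(f^1_{k_1},…,f^m_{k_m})|^r)^{1/r}‖_{L^{q,∞}(ν v^q)} ≤ C ∏_{i=1}^m ‖(Σ_{k_i} |f^i_{k_i}|^r)^{1/r}‖_{L^1(u_i)}. -/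

import Mathlib

open MeasureTheory ENNReal Set

noncomputable section

/-- Euclidean space `ℝ^n`. -/
abbrev ESp (n : ℕ) := EuclideanSpace ℝ (Fin n)

/-- An axis-parallel cube with positive finite side length. -/
def IsCube {n : ℕ} (Q : Set (ESp n)) : Prop :=
  ∃ (c : Fin n → ℝ) (h : ℝ), 0 < h ∧ Q = {x : ESp n | ∀ i, c i ≤ x i ∧ x i ≤ c i + h}

/-- The measure `w(E) = ∫_E w` associated to a weight `w`. -/
def wMeas {n : ℕ} (w : ESp n → ℝ) (E : Set (ESp n)) : ℝ≥0∞ :=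
  ∫⁻ x in E, ENNReal.ofReal (w x)

/-- A weight: a nonnegative locally integrable function, positive (and finite) a.e. -/
def IsWeight {n : ℕ} (w : ESp n → ℝ) : Prop :=
  Measurable w ∧ (∀ x, 0 ≤ w x) ∧ (∀ᵐ x ∂(volume : Measure (ESp n)), 0 < w x) ∧
    ∀ Q : Set (ESp n), IsCube Q → wMeas w Q < ⊤

/-- `C` is an admissible `A₁` constant for `w`. -/
def A1Const {n : ℕ} (w : ESp n → ℝ) (C : ℝ≥0∞) : Prop :=
  ∀ Q : Set (ESp n), IsCube Q →
    (volume Q)⁻¹ * wMeas w Q ≤ C * essInf (fun x => ENNReal.ofReal (w x)) (volume.restrict Q)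

/-- The Muckenhoupt class `A₁`. -/
def IsA1 {n : ℕ} (w : ESp n → ℝ) : Prop := ∃ C : ℝ≥0∞, C < ⊤ ∧ A1Const w C

/-- The Muckenhoupt class `A_p`, `1 < p < ∞`. -/
def IsAp {n : ℕ} (w : ESp n → ℝ) (p : ℝ) : Prop :=
  ∃ C : ℝ≥0∞, C < ⊤ ∧ ∀ Q : Set (ESp n), IsCube Q →
    ((volume Q)⁻¹ * wMeas w Q) *
      ((volume Q)⁻¹ * ∫⁻ x in Q, ENNReal.ofReal (w x) ^ (1 - p / (p - 1))) ^ (p - 1) ≤ C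

/-- The class `A_∞ = ⋃_{p ≥ 1} A_p`. -/
def IsAinfty {n : ℕ} (w : ESp n → ℝ) : Prop :=
  IsA1 w ∨ ∃ p : ℝ, 1 < p ∧ IsAp w p

/-- The Hardy–Littlewood maximal function (over cubes). -/
def maxFn {n : ℕ} (f : ESp n → ℝ) (x : ESp n) : ℝ≥0∞ :=
  ⨆ (Q : Set (ESp n)) (_ : IsCube Q) (_ : x ∈ Q),
    (volume Q)⁻¹ * ∫⁻ y in Q, ENNReal.ofReal |f y|

/-- The Fujii–Wilson `A_∞` constant. -/
def FW {n : ℕ} (w : ESp n → ℝ) : ℝ≥0∞ :=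
  ⨆ (Q : Set (ESp n)) (_ : IsCube Q),
    (wMeas w Q)⁻¹ * ∫⁻ x in Q, maxFn (Q.indicator w) x

/-- The weighted weak `L^{q,∞}(w)` quasinorm of `g`. -/
def wnorm {n : ℕ} (g : ESp n → ℝ≥0∞) (q : ℝ) (w : ESp n → ℝ) : ℝ≥0∞ :=
  ⨆ (t : ℝ) (_ : 0 < t), ENNReal.ofReal t * (wMeas w {x | ENNReal.ofReal t < g x}) ^ (1 / q)

/-- The weighted `L¹(w)` norm. -/
def L1norm {n : ℕ} (f : ESp n → ℝ) (w : ESp n → ℝ) : ℝ≥0∞ :=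
  ∫⁻ x, ENNReal.ofReal (|f x| * w x)

/-- The fractional maximal operator `M_α`. -/
def fracM {n : ℕ} (α : ℝ) (f : ESp n → ℝ) (x : ESp n) : ℝ≥0∞ :=
  ⨆ (Q : Set (ESp n)) (_ : IsCube Q) (_ : x ∈ Q),
    ((volume Q) ^ (1 - α / (n : ℝ)))⁻¹ * ∫⁻ y in Q, ENNReal.ofReal |f y|

/-- The fractional integral (Riesz potential) `I_α`. -/
def fracI {n : ℕ} (α : ℝ) (f : ESp n → ℝ) (x : ESp n) : ℝ :=
  ∫ y, f y / dist x y ^ ((n : ℝ) - α)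

/-- The multi(sub)linear maximal function `𝓜`. -/
def multiM {n m : ℕ} (f : Fin m → ESp n → ℝ) (x : ESp n) : ℝ≥0∞ :=
  ⨆ (Q : Set (ESp n)) (_ : IsCube Q) (_ : x ∈ Q),
    ∏ i, (volume Q)⁻¹ * ∫⁻ y in Q, ENNReal.ofReal |f i y|

/-- The multi(sub)linear fractional maximal operator `𝓜_α`. -/
def multiMα {n m : ℕ} (α : ℝ) (f : Fin m → ESp n → ℝ) (x : ESp n) : ℝ≥0∞ :=
  ⨆ (Q : Set (ESp n)) (_ : IsCube Q) (_ : x ∈ Q),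
    ∏ i, ((volume Q) ^ (1 - α / ((m : ℝ) * (n : ℝ))))⁻¹ * ∫⁻ y in Q, ENNReal.ofReal |f i y|

/-- The multilinear fractional integral `𝓘_α`. -/
def multiIα {n m : ℕ} (α : ℝ) (f : Fin m → ESp n → ℝ) (x : ESp n) : ℝ :=
  ∫ y : Fin m → ESp n, (∏ i, f i (y i)) / (∑ i, dist x (y i)) ^ ((m : ℝ) * (n : ℝ) - α)

/-- The multilinear class `A_{(1,…,1)}`. -/
def A11 {n m : ℕ} (w : Fin m → ESp n → ℝ) : Prop :=
  ∃ C : ℝ≥0∞, C < ⊤ ∧ ∀ Q : Set (ESp n), IsCube Q →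
    ((volume Q)⁻¹ * ∫⁻ x in Q, ENNReal.ofReal (∏ i, w i x ^ ((m : ℝ)⁻¹))) ^ (m : ℝ) *
      ∏ i, (essInf (fun x => ENNReal.ofReal (w i x)) (volume.restrict Q))⁻¹ ≤ C

/-- Product of one-variable lower integrals. -/
theorem vv_lintegral_pi_prod {m : ℕ} {X : Type*} [MeasureSpace X]
    [SigmaFinite (volume : Measure X)] (f : Fin m → X → ℝ≥0∞) (hf : ∀ i, Measurable (f i)) :
    ∫⁻ y : Fin m → X, ∏ i, f i (y i) = ∏ i, ∫⁻ y, f i y := by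
  induction m with
  | zero =>
    simp [volume_pi]
  | succ m ih =>
    have h := (volume_preserving_piFinSuccAbove (fun _ : Fin (m + 1) => X) 0).symm
    rw [← h.lintegral_comp_emb (MeasurableEquiv.measurableEmbedding _)]
    simp_rw [MeasurableEquiv.piFinSuccAbove_symm_apply, Fin.insertNthEquiv,
        Fin.prod_univ_succ, Fin.insertNth_zero]
    simp only [Equiv.coe_fn_mk, Fin.cons_zero, Fin.cons_succ]
    rw [Measure.volume_eq_prod]
    have := lintegral_prod_mul (μ := (volume : Measure X)) (ν := (volume : Measure (Fin m → X)))
      (f := f 0) (g := fun y => ∏ i : Fin m, f i.succ (y i)) (hf 0).aemeasurable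
      (Finset.measurable_prod _ (fun i _ => (hf _).comp (measurable_pi_apply i))).aemeasurable
    rw [ih _ (fun i => hf _)] at this
    exact this

/-- Product of sums. -/
theorem vv_tsum_pi_prod {m : ℕ} (a : Fin m → ℕ → ℝ≥0∞) :
    ∑' k : Fin m → ℕ, ∏ i, a i (k i) = ∏ i, ∑' k, a i k := by
  induction m with
  | zero => simp
  | succ m ih =>
    rw [← (Fin.consEquiv (fun _ : Fin (m + 1) => ℕ)).tsum_eq, ENNReal.tsum_prod', Fin.prod_univ_succ,
      ← ih, ← ENNReal.tsum_mul_right]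
    congr 1; ext k
    rw [← ENNReal.tsum_mul_left]
    simp [Fin.consEquiv, Fin.prod_univ_succ]

/-- The Minkowski integral inequality, `ℓ^r` version. -/
theorem vv_minkowski {X : Type*} [MeasurableSpace X] {μ : Measure X} {r : ℝ} (hr : 1 < r)
    (f : ℕ → X → ℝ≥0∞) (hf : ∀ k, Measurable (f k)) :
    (∑' k, (∫⁻ x, f k x ∂μ) ^ r) ^ (1 / r) ≤ ∫⁻ x, (∑' k, (f k x) ^ r) ^ (1 / r) ∂μ := by
  have hr0 : 0 < r := by linarith
  set G : ℝ≥0∞ := ∫⁻ x, (∑' k, (f k x) ^ r) ^ (1 / r) ∂μ with hG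
  rw [one_div, ENNReal.rpow_inv_le_iff hr0, ENNReal.tsum_eq_iSup_sum]
  refine iSup_le fun s => ?_
  have hle : ∀ k, ∫⁻ x, f k x ∂μ ≤ G := by
    intro k
    refine lintegral_mono fun x => ?_
    rw [one_div, ENNReal.le_rpow_inv_iff hr0]
    exact ENNReal.le_tsum k
  by_cases hGtop : G = ⊤
  · rw [hGtop, ENNReal.top_rpow_of_pos hr0]; exact le_top
  set a : ℕ → ℝ≥0∞ := fun k => ∫⁻ x, f k x ∂μ with ha
  have hafin : ∀ k, a k ≠ ⊤ := fun k => ne_top_of_le_ne_top hGtop (hle k)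
  set S : ℝ≥0∞ := ∑ k ∈ s, a k ^ r with hS
  have hSfin : S ≠ ⊤ := by
    rw [hS]
    exact (ENNReal.sum_lt_top.2 fun k _ => (ENNReal.rpow_lt_top_of_nonneg hr0.le (hafin k))).ne
  by_cases hS0 : S = 0
  · rw [hS0]; exact zero_le
  have hconj : (r / (r - 1)).HolderConjugate r := (Real.HolderConjugate.conjExponent hr).symm
  have key : S ≤ S ^ (1 - 1 / r) * G := by
    calc S = ∑ k ∈ s, ∫⁻ x, a k ^ (r - 1) * f k x ∂μ := by
          rw [hS]; refine Finset.sum_congr rfl fun k _ => ?_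
          rw [lintegral_const_mul _ (hf k)]
          change _ = a k ^ (r - 1) * a k
          rw [← ENNReal.rpow_one (a k), ← ENNReal.rpow_mul, ← ENNReal.rpow_mul,
            ← ENNReal.rpow_add_of_nonneg _ _ (by linarith) (by linarith)]
          congr 1; ring
      _ = ∫⁻ x, ∑ k ∈ s, a k ^ (r - 1) * f k x ∂μ := by
          rw [lintegral_finsetSum]; intro k _; exact (hf k).const_mul _
      _ ≤ ∫⁻ x, S ^ (1 - 1 / r) * (∑' k, (f k x) ^ r) ^ (1 / r) ∂μ := by
          refine lintegral_mono fun x => ?_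
          refine (ENNReal.inner_le_Lp_mul_Lq s _ _ hconj).trans ?_
          have h1 : (∑ k ∈ s, (a k ^ (r - 1)) ^ (r / (r - 1))) = S := by
            rw [hS]; refine Finset.sum_congr rfl fun k _ => ?_
            rw [← ENNReal.rpow_mul]; congr 1
            have : r - 1 ≠ 0 := by linarith
            field_simp
          have h2 : 1 / (r / (r - 1)) = 1 - 1 / r := by
            field_simp
          rw [h1, h2]
          gcongr
          exact ENNReal.sum_le_tsum s
      _ = S ^ (1 - 1 / r) * G := by
          rw [lintegral_const_mul' _ _ (ENNReal.rpow_ne_top_of_nonneg ?_ hSfin)]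
          rw [sub_nonneg, div_le_one hr0]; exact hr.le
  have h3 : S ^ (1 / r) ≤ G := by
    have e : S = S ^ (1 - 1 / r) * S ^ (1 / r) := by
      rw [← ENNReal.rpow_add _ _ hS0 hSfin]; simp
    have hne0 : S ^ (1 - 1 / r) ≠ 0 := by
      simp [ENNReal.rpow_eq_zero_iff, hS0, hSfin]
    have hnet : S ^ (1 - 1 / r) ≠ ⊤ := by
      simp [ENNReal.rpow_eq_top_iff, hS0, hSfin]
    rw [e] at key
    conv at key =>
      rhs
      rw [← e]
    exact (ENNReal.mul_le_mul_iff_right hne0 hnet).1 key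
  rwa [one_div, ENNReal.rpow_inv_le_iff hr0] at h3

theorem vv_layer (h a : ℝ≥0∞) (ha0 : a ≠ 0) :
    h ≤ a + ∑' j : ℕ, (if 2 ^ j * a < h then 2 ^ (j + 1) * a else 0) := by
  by_cases hh : h ≤ a
  · exact hh.trans le_self_add
  push Not at hh
  by_cases hex : ∃ j : ℕ, h ≤ 2 ^ j * a
  · classical
    set j := Nat.find hex with hj
    have hspec := Nat.find_spec hex
    have hpos : 0 < j := by
      rw [Nat.pos_iff_ne_zero]; intro h0
      rw [← hj, h0] at hspec
      simp at hspec; exact absurd hspec (not_le.2 hh)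
    have hmin := Nat.find_min hex (m := j - 1) (by omega)
    push Not at hmin
    refine le_trans ?_ le_add_self
    refine le_trans ?_ (ENNReal.le_tsum (j - 1))
    rw [if_pos hmin, show j - 1 + 1 = j by omega]
    exact hspec
  · push Not at hex
    have : ∑' j : ℕ, (if 2 ^ j * a < h then 2 ^ (j + 1) * a else 0) = ⊤ := by
      rw [eq_top_iff]
      have h1 : ∑' j : ℕ, a = ⊤ := ENNReal.tsum_const_eq_top_of_ne_zero ha0
      rw [← h1]
      refine ENNReal.tsum_le_tsum fun j => ?_
      rw [if_pos (hex j)]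
      have : (1 : ℝ≥0∞) ≤ 2 ^ (j + 1) := one_le_pow₀ (by norm_num)
      calc a = 1 * a := (one_mul a).symm
        _ ≤ _ := by gcongr
    rw [this]; simp

/-- integral of a weak `L^p` function -/
theorem vv_weak_int {X : Type*} [MeasurableSpace X] {μ : Measure X} {p : ℝ} (hp : 1 < p) :
    ∃ C : ℝ≥0∞, C ≠ ⊤ ∧ ∀ (A : ℝ≥0∞) (h : X → ℝ≥0∞), Measurable h →
      (∀ s : ℝ≥0∞, s ≠ 0 → s ≠ ⊤ → μ {x | s < h x} ≤ A * s ^ (-p)) →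
      ∀ (a : ℝ≥0∞), a ≠ 0 → a ≠ ⊤ → ∀ E : Set X,
        ∫⁻ x in E, h x ∂μ ≤ a * μ E + C * A * a ^ (1 - p) := by
  refine ⟨∑' j : ℕ, 2 * ((2 : ℝ≥0∞) ^ (1 - p)) ^ j, ?_, ?_⟩
  · rw [ENNReal.tsum_mul_left, ENNReal.tsum_geometric]
    refine ENNReal.mul_ne_top (by norm_num) (ENNReal.inv_ne_top.2 ?_)
    have : (2 : ℝ≥0∞) ^ (1 - p) < 1 := ENNReal.rpow_lt_one_of_one_lt_of_neg (by norm_num) (by linarith)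
    exact (tsub_pos_of_lt this).ne'
  · intro A h hm hw a ha0 hat E
    calc ∫⁻ x in E, h x ∂μ
        ≤ ∫⁻ x in E, (a + ∑' j : ℕ, (if 2 ^ j * a < h x then 2 ^ (j + 1) * a else 0)) ∂μ :=
          lintegral_mono fun x => vv_layer _ _ ha0
      _ = a * μ E + ∑' j : ℕ, ∫⁻ x in E, (if 2 ^ j * a < h x then 2 ^ (j + 1) * a else 0) ∂μ := by
          rw [lintegral_add_left measurable_const, lintegral_tsum]
          · simp
          · intro j
            exact (Measurable.ite (measurableSet_lt measurable_const hm) measurable_const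
              measurable_const).aemeasurable
      _ ≤ a * μ E + ∑' j : ℕ, 2 * ((2 : ℝ≥0∞) ^ (1 - p)) ^ j * (A * a ^ (1 - p)) := by
          gcongr with j
          have hne0 : (2 : ℝ≥0∞) ^ j * a ≠ 0 := by positivity
          have hnet : (2 : ℝ≥0∞) ^ j * a ≠ ⊤ :=
            ENNReal.mul_ne_top (ENNReal.pow_ne_top (by norm_num)) hat
          calc ∫⁻ x in E, (if 2 ^ j * a < h x then 2 ^ (j + 1) * a else 0) ∂μ
              ≤ ∫⁻ x, (if 2 ^ j * a < h x then 2 ^ (j + 1) * a else 0) ∂μ :=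
                setLIntegral_le_lintegral _ _
            _ = ∫⁻ x, {x | 2 ^ j * a < h x}.indicator (fun _ => 2 ^ (j + 1) * a) x ∂μ := by
                congr 1; ext x; simp [Set.indicator]
            _ = 2 ^ (j + 1) * a * μ {x | 2 ^ j * a < h x} := by
                rw [lintegral_indicator_const (measurableSet_lt measurable_const hm)]
            _ ≤ 2 ^ (j + 1) * a * (A * (2 ^ j * a) ^ (-p)) := by
                gcongr; exact hw _ hne0 hnet
            _ = 2 * A * ((2 ^ j * a) ^ (1 : ℝ) * (2 ^ j * a) ^ (-p)) := by
                rw [ENNReal.rpow_one]; ring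
            _ = 2 * ((2 : ℝ≥0∞) ^ (1 - p)) ^ j * (A * a ^ (1 - p)) := by
                rw [← ENNReal.rpow_add _ _ hne0 hnet, ← sub_eq_add_neg,
                  ENNReal.mul_rpow_of_ne_top (ENNReal.pow_ne_top (by norm_num)) hat,
                  ← ENNReal.rpow_natCast, ← ENNReal.rpow_natCast, ← ENNReal.rpow_mul,
                  ← ENNReal.rpow_mul, mul_comm (j : ℝ)]
                ring
      _ = _ := by
          rw [ENNReal.tsum_mul_right]; ring

/-- Weak-type bound for a linear positive operator from testing on point masses. -/
theorem vv_weak_type {X Y : Type*} [MeasurableSpace X] [MeasurableSpace Y]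
    {μ : Measure X} [SigmaFinite μ] {ν : Measure Y} [SFinite ν] {p : ℝ} (hp : 1 < p)
    (A : ℝ≥0∞) (hA : A ≠ ⊤) (K : X → Y → ℝ≥0∞) (hK : Measurable (Function.uncurry K))
    (v : X → ℝ≥0∞) (hv : Measurable v) (hv0 : ∀ᵐ x ∂μ, v x ≠ 0 ∧ v x ≠ ⊤)
    (htest : ∀ᵐ y ∂ν, ∀ s : ℝ≥0∞, s ≠ 0 → s ≠ ⊤ → μ {x | s * v x < K x y} ≤ A * s ^ (-p)) :
    ∃ A' : ℝ≥0∞, A' ≠ ⊤ ∧ ∀ G : Y → ℝ≥0∞, Measurable G → ∫⁻ y, G y ∂ν ≠ 0 → ∫⁻ y, G y ∂ν ≠ ⊤ →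
      ∀ τ : ℝ≥0∞, τ ≠ 0 → τ ≠ ⊤ →
      μ {x | τ * (∫⁻ y, G y ∂ν) * v x < ∫⁻ y, K x y * G y ∂ν} ≤ A' * τ ^ (-p) := by
  obtain ⟨C, hC, hwint⟩ := vv_weak_int (μ := μ) hp
  have h2t : (2 : ℝ≥0∞)⁻¹ ^ (1 - p) ≠ ⊤ := by
    apply ENNReal.rpow_ne_top_of_ne_zero <;> simp
  refine ⟨2 * (C * A * 2⁻¹ ^ (1 - p)), ENNReal.mul_ne_top (by norm_num)
    (ENNReal.mul_ne_top (ENNReal.mul_ne_top hC hA) h2t), ?_⟩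
  intro G hG hN0 hNt τ hτ0 hτt
  set N := ∫⁻ y, G y ∂ν with hN
  have hKG : Measurable (fun x => ∫⁻ y, K x y * G y ∂ν) :=
    Measurable.lintegral_prod_right' (f := fun z : X × Y => K z.1 z.2 * G z.2)
      (hK.mul (hG.comp measurable_snd))
  set E := {x | τ * N * v x < ∫⁻ y, K x y * G y ∂ν} with hE
  have hEm : MeasurableSet E := measurableSet_lt (hv.const_mul _) hKG
  rw [← Measure.iSup_restrict_spanningSets]
  refine iSup_le fun j => ?_
  rw [Measure.restrict_apply hEm]
  set E' := E ∩ spanningSets μ j with hE'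
  have hE'm : MeasurableSet E' := hEm.inter (measurableSet_spanningSets μ j)
  have hfin : μ E' ≠ ⊤ := ((measure_mono inter_subset_right).trans_lt (measure_spanningSets_lt_top μ j)).ne
  have hKv : Measurable (fun z : X × Y => K z.1 z.2 / v z.1) := hK.div (hv.comp measurable_fst)
  have key : τ * N * μ E' ≤ N * (τ / 2 * μ E' + C * A * (τ / 2) ^ (1 - p)) := by
    calc τ * N * μ E' = ∫⁻ x in E', τ * N ∂μ := by simp
      _ ≤ ∫⁻ x in E', (∫⁻ y, (K x y / v x) * G y ∂ν) ∂μ := by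
          apply lintegral_mono_ae
          filter_upwards [ae_restrict_mem hE'm, ae_restrict_of_ae hv0] with x hx hvx
          have h1 : τ * N * v x ≤ ∫⁻ y, K x y * G y ∂ν := le_of_lt hx.1
          have h2 : ∫⁻ y, (K x y / v x) * G y ∂ν = (∫⁻ y, K x y * G y ∂ν) / v x := by
            rw [ENNReal.div_eq_inv_mul, ← lintegral_const_mul' _ _ (ENNReal.inv_ne_top.2 hvx.1)]
            congr 1; ext y; rw [ENNReal.div_eq_inv_mul]; ring
          rw [h2, ENNReal.le_div_iff_mul_le (Or.inl hvx.1) (Or.inl hvx.2)]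
          exact h1
      _ = ∫⁻ y, (∫⁻ x in E', (K x y / v x) * G y ∂μ) ∂ν := by
          apply lintegral_lintegral_swap
          exact (hKv.mul (hG.comp measurable_snd)).aemeasurable
      _ ≤ ∫⁻ y, G y * (τ / 2 * μ E' + C * A * (τ / 2) ^ (1 - p)) ∂ν := by
          apply lintegral_mono_ae
          filter_upwards [htest] with y hy
          have hKy : Measurable (fun x => K x y / v x) := hKv.comp (measurable_id.prodMk measurable_const)
          rw [lintegral_mul_const _ hKy, mul_comm]
          gcongr
          refine hwint A _ hKy ?_ (τ / 2) (by simp [hτ0]) (ENNReal.div_ne_top hτt (by norm_num)) E'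
          intro s hs0 hst
          refine le_trans ?_ (hy s hs0 hst)
          apply measure_mono_ae
          filter_upwards [hv0] with x hx hsx
          have : s < K x y / v x := hsx
          exact (ENNReal.lt_div_iff_mul_lt (Or.inl hx.1) (Or.inl hx.2)).1 this
      _ = _ := by rw [lintegral_mul_const _ hG]
  have key2 : τ * μ E' ≤ τ / 2 * μ E' + C * A * (τ / 2) ^ (1 - p) := by
    rw [← ENNReal.mul_le_mul_iff_right hN0 hNt]
    calc N * (τ * μ E') = τ * N * μ E' := by ring
      _ ≤ _ := key
  have key3 : τ / 2 * μ E' ≤ C * A * (τ / 2) ^ (1 - p) := by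
    have h4 : τ * μ E' = τ / 2 * μ E' + τ / 2 * μ E' := by
      rw [← add_mul, ENNReal.add_halves]
    rw [h4] at key2
    exact (ENNReal.add_le_add_iff_left (ENNReal.mul_ne_top (ENNReal.div_ne_top hτt (by norm_num)) hfin)).1 key2
  calc μ E' = (2 * τ⁻¹) * (τ / 2 * μ E') := by
        rw [ENNReal.div_eq_inv_mul]
        calc μ E' = (2 * 2⁻¹) * (τ⁻¹ * τ) * μ E' := by
              rw [ENNReal.mul_inv_cancel (by norm_num) (by norm_num), ENNReal.inv_mul_cancel hτ0 hτt]; simp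
          _ = _ := by ring
    _ ≤ (2 * τ⁻¹) * (C * A * (τ / 2) ^ (1 - p)) := by gcongr
    _ = _ := by
        rw [div_eq_mul_inv, ENNReal.mul_rpow_of_ne_top hτt (by simp), ← ENNReal.rpow_neg_one τ]
        calc _ = 2 * (C * A * 2⁻¹ ^ (1 - p)) * (τ ^ (-1 : ℝ) * τ ^ (1 - p)) := by ring
          _ = _ := by
            rw [← ENNReal.rpow_add _ _ hτ0 hτt]
            congr 2; ring

theorem vv_vol_ball {n : ℕ} (x : Fin n → ℝ) {r : ℝ} (hr : 0 ≤ r) :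
    volume (Metric.closedBall x r) = (ENNReal.ofReal (2 * r)) ^ n := by
  rw [Real.volume_pi_closedBall x hr, ENNReal.ofReal_pow (by linarith)]; simp

theorem vv_stop {n : ℕ} (E : Set (Fin n → ℝ)) (ρ : ℝ) (hρ : 0 < ρ)
    (hE : 2 * volume E ≤ ENNReal.ofReal (2 * ρ) ^ n) (z : Fin n → ℝ)
    (hz : Filter.Tendsto (fun r => volume (E ∩ Metric.closedBall z r) / volume (Metric.closedBall z r))
      (nhdsWithin 0 (Ioi 0)) (nhds 1)) :
    ∃ r, 0 < r ∧ r ≤ ρ ∧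
      2 * volume (Metric.closedBall z r ∩ E) ≤ volume (Metric.closedBall z r) ∧
      volume (Metric.closedBall z r) ≤ 2 ^ (n + 1) * volume (E ∩ Metric.closedBall z r) := by
  have hex : ∃ j : ℕ, volume (Metric.closedBall z (ρ / 2 ^ j)) < 2 * volume (E ∩ Metric.closedBall z (ρ / 2 ^ j)) := by
    have ht : Filter.Tendsto (fun j : ℕ => ρ / 2 ^ j) Filter.atTop (nhdsWithin 0 (Ioi 0)) := by
      rw [tendsto_nhdsWithin_iff]
      refine ⟨?_, Filter.Eventually.of_forall fun j => by simp only [mem_Ioi]; positivity⟩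
      have := (tendsto_pow_atTop_nhds_zero_of_lt_one (r := (1/2 : ℝ)) (by norm_num) (by norm_num)).const_mul ρ
      simp only [mul_zero] at this
      refine this.congr fun j => ?_
      rw [one_div, inv_pow]; rfl
    have h2 := (hz.comp ht).eventually (lt_mem_nhds (show (2⁻¹ : ℝ≥0∞) < 1 by
      rw [ENNReal.inv_lt_one]; norm_num))
    obtain ⟨j, hj⟩ := h2.exists
    refine ⟨j, ?_⟩
    simp only [Function.comp] at hj
    have hpos : 0 < ρ / 2 ^ j := by positivity
    have hb0 : volume (Metric.closedBall z (ρ / 2 ^ j)) ≠ 0 :=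
      (Metric.measure_closedBall_pos _ _ hpos).ne'
    have hbt : volume (Metric.closedBall z (ρ / 2 ^ j)) ≠ ⊤ := measure_closedBall_lt_top.ne
    rw [ENNReal.lt_div_iff_mul_lt (Or.inl hb0) (Or.inl hbt)] at hj
    calc volume (Metric.closedBall z (ρ / 2 ^ j)) = 2 * (2⁻¹ * volume (Metric.closedBall z (ρ / 2 ^ j))) := by
          rw [← mul_assoc, ENNReal.mul_inv_cancel (by norm_num) (by norm_num), one_mul]
      _ < _ := by
          exact (ENNReal.mul_lt_mul_iff_right (by norm_num) (by norm_num)).2 hj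
  classical
  set j := Nat.find hex with hj
  have hspec := Nat.find_spec hex
  rw [← hj] at hspec
  have hpos : 0 < j := by
    rw [Nat.pos_iff_ne_zero]; intro h0
    rw [h0] at hspec
    simp only [pow_zero, div_one] at hspec
    rw [vv_vol_ball z hρ.le] at hspec
    have : 2 * volume (E ∩ Metric.closedBall z ρ) ≤ 2 * volume E := by gcongr; exact inter_subset_left
    exact absurd (hspec.trans_le (this.trans hE)) (lt_irrefl _)
  have hmin := Nat.find_min hex (m := j - 1) (by omega)
  push Not at hmin
  obtain ⟨i, hi⟩ : ∃ i, j = i + 1 := ⟨j - 1, by omega⟩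
  rw [hi] at hspec hmin
  simp only [Nat.add_sub_cancel] at hmin
  have hri : 0 < ρ / 2 ^ i := by positivity
  refine ⟨ρ / 2 ^ i, hri, div_le_self hρ.le (one_le_pow₀ (by norm_num)), ?_, ?_⟩
  · rw [inter_comm]; exact hmin
  · have e : ρ / 2 ^ (i + 1) = (ρ / 2 ^ i) / 2 := by rw [pow_succ]; field_simp
    rw [e] at hspec
    calc volume (Metric.closedBall z (ρ / 2 ^ i)) = 2 ^ n * volume (Metric.closedBall z (ρ / 2 ^ i / 2)) := by
          rw [vv_vol_ball z hri.le, vv_vol_ball z (by positivity), ← mul_pow]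
          congr 1
          rw [show (2 : ℝ≥0∞) = ENNReal.ofReal 2 by simp, ← ENNReal.ofReal_mul (by norm_num)]
          congr 1; ring
      _ ≤ 2 ^ n * (2 * volume (E ∩ Metric.closedBall z (ρ / 2 ^ i / 2))) := by gcongr
      _ ≤ 2 ^ n * (2 * volume (E ∩ Metric.closedBall z (ρ / 2 ^ i))) := by
          refine mul_le_mul_right (mul_le_mul_right (measure_mono (inter_subset_inter_right _
            (Metric.closedBall_subset_closedBall (by linarith)))) _) _
      _ = _ := by rw [pow_succ]; ring

theorem vv_decay_step {n : ℕ} (ν : Measure (Fin n → ℝ)) (hac : ν ≪ volume)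
    (hfin : ∀ x r, ν (Metric.closedBall x r) ≠ ⊤) (C : ℝ≥0∞) (hC : C ≠ ⊤) (hC1 : 1 ≤ C)
    (H : ∀ x r, 0 < r → ∀ E ⊆ Metric.closedBall x r, MeasurableSet E →
      volume (Metric.closedBall x r) ≤ 2 * volume E → ν (Metric.closedBall x (5 * r)) ≤ C * ν E)
    (x : Fin n → ℝ) (s ρ : ℝ) (hρ : 0 < ρ) (E : Set (Fin n → ℝ)) (hEm : MeasurableSet E)
    (hEs : E ⊆ Metric.closedBall x s) (hE : 2 * volume E ≤ ENNReal.ofReal (2 * ρ) ^ n) :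
    ∃ F, MeasurableSet F ∧ F ⊆ Metric.closedBall x (s + 5 * ρ) ∧
      volume F ≤ 2 * 10 ^ n * volume E ∧ ν E ≤ (1 - C⁻¹) * ν F := by
  have hdens := Besicovitch.ae_tendsto_measure_inter_div (volume : Measure (Fin n → ℝ)) E
  set T : Set (Fin n → ℝ) := {z | z ∈ E ∧ Filter.Tendsto (fun r => volume (E ∩ Metric.closedBall z r) /
      volume (Metric.closedBall z r)) (nhdsWithin 0 (Ioi 0)) (nhds 1)} with hT
  have hch : ∀ z : Fin n → ℝ, ∃ r, z ∈ T → 0 < r ∧ r ≤ ρ ∧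
      2 * volume (Metric.closedBall z r ∩ E) ≤ volume (Metric.closedBall z r) ∧
      volume (Metric.closedBall z r) ≤ 2 ^ (n + 1) * volume (E ∩ Metric.closedBall z r) := by
    intro z
    by_cases hz : z ∈ T
    · obtain ⟨r, h⟩ := vv_stop E ρ hρ hE z hz.2
      exact ⟨r, fun _ => h⟩
    · exact ⟨0, fun h => absurd h hz⟩
  choose r hr using hch
  obtain ⟨U, hUT, hdisj, hcov⟩ := Vitali.exists_disjoint_subfamily_covering_enlargement_closedBall T
    (fun z => z) r ρ (fun z hz => (hr z hz).2.1) 5 (by norm_num)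
  have hUc : U.Countable := by
    refine hdisj.countable_of_nonempty_interior fun z hz => ?_
    refine ⟨z, ?_⟩
    exact (Metric.ball_subset_interior_closedBall) (Metric.mem_ball_self (hr z (hUT hz)).1)
  haveI := hUc.to_subtype
  set F := ⋃ z : U, Metric.closedBall (z : Fin n → ℝ) (5 * r z) with hF
  have hFm : MeasurableSet F := MeasurableSet.iUnion fun z => Metric.isClosed_closedBall.measurableSet
  have hdisj' : Pairwise (Function.onFun Disjoint fun z : U => Metric.closedBall (z : Fin n → ℝ) (r z)) := by
    intro a b hab
    exact hdisj a.2 b.2 (fun h => hab (Subtype.ext h))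
  have hFs : F ⊆ Metric.closedBall x (s + 5 * ρ) := by
    refine iUnion_subset fun z => ?_
    apply Metric.closedBall_subset_closedBall'
    have h1 : dist (z : Fin n → ℝ) x ≤ s := hEs (hUT z.2).1
    have h2 := (hr z (hUT z.2)).2.1
    linarith
  have hEF : ∀ᵐ z, z ∈ E → z ∈ F := by
    rw [ae_restrict_iff' hEm] at hdens
    filter_upwards [hdens] with z hz hzE
    have hzT : z ∈ T := ⟨hzE, hz hzE⟩
    obtain ⟨b, hb, hsub⟩ := hcov z hzT
    exact mem_iUnion.2 ⟨⟨b, hb⟩, hsub (Metric.mem_closedBall_self (hr z hzT).1.le)⟩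
  refine ⟨F, hFm, hFs, ?_, ?_⟩
  · calc volume F ≤ ∑' z : U, volume (Metric.closedBall (z : Fin n → ℝ) (5 * r z)) := measure_iUnion_le _
      _ ≤ ∑' z : U, 2 * 10 ^ n * volume (E ∩ Metric.closedBall (z : Fin n → ℝ) (r z)) := by
          refine ENNReal.tsum_le_tsum fun z => ?_
          obtain ⟨h0, _, _, h3⟩ := hr z (hUT z.2)
          calc volume (Metric.closedBall (z : Fin n → ℝ) (5 * r z))
              = 5 ^ n * volume (Metric.closedBall (z : Fin n → ℝ) (r z)) := by
                rw [vv_vol_ball _ h0.le, vv_vol_ball _ (by positivity), ← mul_pow]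
                congr 1
                rw [show (5 : ℝ≥0∞) = ENNReal.ofReal 5 by simp, ← ENNReal.ofReal_mul (by norm_num)]
                congr 1; ring
            _ ≤ 5 ^ n * (2 ^ (n + 1) * volume (E ∩ Metric.closedBall (z : Fin n → ℝ) (r z))) := by gcongr
            _ = _ := by
                rw [show (10 : ℝ≥0∞) = 5 * 2 by norm_num, mul_pow]; ring
      _ = 2 * 10 ^ n * ∑' z : U, volume (E ∩ Metric.closedBall (z : Fin n → ℝ) (r z)) := ENNReal.tsum_mul_left
      _ ≤ 2 * 10 ^ n * volume E := by
          gcongr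
          rw [← measure_iUnion]
          · exact measure_mono (iUnion_subset fun z => inter_subset_left)
          · intro a b hab
            exact (hdisj' hab).mono inter_subset_right inter_subset_right
          · exact fun z => hEm.inter Metric.isClosed_closedBall.measurableSet
  · have h1 : ν F ≤ C * ν (F \ E) := by
      calc ν F ≤ ∑' z : U, ν (Metric.closedBall (z : Fin n → ℝ) (5 * r z)) := measure_iUnion_le _
        _ ≤ ∑' z : U, C * ν (Metric.closedBall (z : Fin n → ℝ) (r z) \ E) := by
            refine ENNReal.tsum_le_tsum fun z => ?_
            obtain ⟨h0, _, h2, _⟩ := hr z (hUT z.2)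
            refine H _ _ h0 _ sdiff_subset (Metric.isClosed_closedBall.measurableSet.diff hEm) ?_
            have hs := measure_inter_add_sdiff (μ := volume) (Metric.closedBall (z : Fin n → ℝ) (r z)) hEm
            have hbt : volume (Metric.closedBall (z : Fin n → ℝ) (r z) ∩ E) ≠ ⊤ :=
              (measure_mono inter_subset_left |>.trans_lt measure_closedBall_lt_top).ne
            rw [← hs, two_mul] at h2
            have h5 := (ENNReal.add_le_add_iff_left hbt).1 h2
            rw [← hs, two_mul]
            gcongr
        _ = C * ∑' z : U, ν (Metric.closedBall (z : Fin n → ℝ) (r z) \ E) := ENNReal.tsum_mul_left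
        _ ≤ C * ν (F \ E) := by
            gcongr
            rw [← measure_iUnion]
            · refine measure_mono (iUnion_subset fun z => ?_)
              refine sdiff_subset_sdiff_left ?_
              refine subset_trans ?_ (subset_iUnion _ z)
              exact Metric.closedBall_subset_closedBall (by linarith [(hr z (hUT z.2)).1])
            · intro a b hab
              exact (hdisj' hab).mono sdiff_subset sdiff_subset
            · exact fun z => Metric.isClosed_closedBall.measurableSet.diff hEm
    have hFt : ν F ≠ ⊤ := (measure_mono hFs |>.trans_lt (lt_top_iff_ne_top.2 (hfin _ _))).ne
    have h2 : ν E ≤ ν (F ∩ E) := by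
      apply measure_mono_ae
      filter_upwards [hac.ae_le hEF] with z hz hzE
      exact ⟨hz hzE, hzE⟩
    have h3 := measure_inter_add_sdiff (μ := ν) F hEm
    have h4 : C⁻¹ * ν F ≤ ν (F \ E) := by
      rw [← ENNReal.div_eq_inv_mul]
      exact ENNReal.div_le_of_le_mul' h1
    refine h2.trans ?_
    have h5 : (1 - C⁻¹) * ν F = ν F - C⁻¹ * ν F := by
      rw [ENNReal.sub_mul (fun _ _ => hFt), one_mul]
    rw [h5]
    refine ENNReal.le_sub_of_add_le_right ?_ ?_
    · exact ENNReal.mul_ne_top (ENNReal.inv_ne_top.2 (by positivity)) hFt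
    · rw [← h3]
      gcongr
      rw [h3]; exact h4

theorem vv_decay {n : ℕ} (ν : Measure (Fin n → ℝ)) (hac : ν ≪ volume)
    (hfin : ∀ x r, ν (Metric.closedBall x r) ≠ ⊤) (C : ℝ≥0∞) (hC : C ≠ ⊤) (hC1 : 1 ≤ C)
    (H : ∀ x r, 0 < r → ∀ E ⊆ Metric.closedBall x r, MeasurableSet E →
      volume (Metric.closedBall x r) ≤ 2 * volume E → ν (Metric.closedBall x (5 * r)) ≤ C * ν E)
    (N : ℕ) : ∀ (x : Fin n → ℝ) (s r : ℝ), 0 < r → ∀ E : Set (Fin n → ℝ), MeasurableSet E →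
      E ⊆ Metric.closedBall x s → (2 * 20 ^ n) ^ N * volume E ≤ ENNReal.ofReal r ^ n →
      ν E ≤ (1 - C⁻¹) ^ N * ν (Metric.closedBall x (s + r)) := by
  induction N with
  | zero =>
    intro x s r hr E hEm hEs _
    rw [pow_zero, one_mul]
    exact measure_mono (hEs.trans (Metric.closedBall_subset_closedBall (by linarith)))
  | succ N ih =>
    intro x s r hr E hEm hEs hE
    have h1 : (1 : ℝ≥0∞) ≤ (2 * 20 ^ n) ^ N := one_le_pow₀ (by
      calc (1 : ℝ≥0∞) = 1 * 1 := by simp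
        _ ≤ 2 * 20 ^ n := by gcongr; norm_num; exact one_le_pow₀ (by norm_num))
    obtain ⟨F, hFm, hFs, hFv, hFE⟩ := vv_decay_step ν hac hfin C hC hC1 H x s (r / 10) (by positivity)
      E hEm hEs (by
        have h3 : (5 : ℝ≥0∞) ^ n * (2 * volume E) ≤ 5 ^ n * ENNReal.ofReal (2 * (r / 10)) ^ n := by
          calc (5 : ℝ≥0∞) ^ n * (2 * volume E) = 1 * (2 * 5 ^ n * volume E) := by ring
            _ ≤ (2 * 20 ^ n) ^ N * (2 * 20 ^ n * volume E) := by
                gcongr; norm_num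
            _ = (2 * 20 ^ n) ^ (N + 1) * volume E := by ring
            _ ≤ _ := hE
            _ = _ := by
                rw [← mul_pow, show (5 : ℝ≥0∞) = ENNReal.ofReal 5 by simp, ← ENNReal.ofReal_mul (by norm_num)]
                congr 2; ring
        exact (ENNReal.mul_le_mul_iff_right (by positivity) (ENNReal.pow_ne_top (by norm_num))).1 h3)
    have h4 := ih x (s + 5 * (r / 10)) (r / 2) (by positivity) F hFm hFs (by
      have h3 : (2 : ℝ≥0∞) ^ n * ((2 * 20 ^ n) ^ N * volume F) ≤ 2 ^ n * ENNReal.ofReal (r / 2) ^ n := by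
        calc (2 : ℝ≥0∞) ^ n * ((2 * 20 ^ n) ^ N * volume F)
            ≤ 2 ^ n * ((2 * 20 ^ n) ^ N * (2 * 10 ^ n * volume E)) := by gcongr
          _ = (2 * 20 ^ n) ^ (N + 1) * volume E := by
              have h20 : (20 : ℝ≥0∞) ^ n = 2 ^ n * 10 ^ n := by rw [← mul_pow]; norm_num
              rw [pow_succ]
              generalize (2 * (20 : ℝ≥0∞) ^ n) ^ N = t
              rw [h20]; ring
          _ ≤ _ := hE
          _ = _ := by
              rw [← mul_pow, show (2 : ℝ≥0∞) = ENNReal.ofReal 2 by simp, ← ENNReal.ofReal_mul (by norm_num)]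
              congr 2; ring
      exact (ENNReal.mul_le_mul_iff_right (by positivity) (ENNReal.pow_ne_top (by norm_num))).1 h3)
    calc ν E ≤ (1 - C⁻¹) * ν F := hFE
      _ ≤ (1 - C⁻¹) * ((1 - C⁻¹) ^ N * ν (Metric.closedBall x (s + 5 * (r / 10) + r / 2))) := by gcongr
      _ = _ := by
          rw [pow_succ, show s + 5 * (r / 10) + r / 2 = s + r by ring]; ring

/-- The cube centred at `x` with half side `r`. -/
def Qc {n : ℕ} (x : ESp n) (r : ℝ) : Set (ESp n) := {z | ∀ i, |z i - x i| ≤ r}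

/-- The measure with density `W`. -/
abbrev wd {n : ℕ} (W : ESp n → ℝ≥0∞) : Measure (ESp n) := volume.withDensity W

theorem Qc_isCube {n : ℕ} (x : ESp n) {r : ℝ} (hr : 0 < r) : IsCube (Qc x r) := by
  refine ⟨fun i => x i - r, 2 * r, by positivity, ?_⟩
  ext z
  simp only [Qc, mem_setOf_eq, abs_le]
  refine forall_congr' fun i => ?_
  constructor <;> rintro ⟨h1, h2⟩ <;> constructor <;> linarith

theorem Qc_eq {n : ℕ} (x : ESp n) {r : ℝ} (hr : 0 ≤ r) :
    Qc x r = (WithLp.ofLp : ESp n → (Fin n → ℝ)) ⁻¹' Metric.closedBall (WithLp.ofLp x) r := by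
  ext z
  simp only [Qc, mem_setOf_eq, mem_preimage, Metric.mem_closedBall, dist_pi_le_iff hr, Real.dist_eq]

theorem Qc_meas {n : ℕ} (x : ESp n) (r : ℝ) : MeasurableSet (Qc x r) := by
  apply IsClosed.measurableSet
  have : Qc x r = ⋂ i, {z : ESp n | |z i - x i| ≤ r} := by ext; simp [Qc]
  rw [this]
  refine isClosed_iInter fun i => isClosed_le ?_ continuous_const
  fun_prop

theorem vol_ofLp {n : ℕ} {E : Set (Fin n → ℝ)} (hE : MeasurableSet E) :
    volume ((WithLp.ofLp : ESp n → (Fin n → ℝ)) ⁻¹' E) = volume E :=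
  (PiLp.volume_preserving_ofLp (Fin n)).measure_preimage hE.nullMeasurableSet

theorem Qc_vol {n : ℕ} (x : ESp n) {r : ℝ} (hr : 0 ≤ r) :
    volume (Qc x r) = ENNReal.ofReal (2 * r) ^ n := by
  rw [Qc_eq x hr, vol_ofLp Metric.isClosed_closedBall.measurableSet, vv_vol_ball _ hr]

theorem Qc_vol_ne_zero {n : ℕ} (x : ESp n) {r : ℝ} (hr : 0 < r) : volume (Qc x r) ≠ 0 := by
  rw [Qc_vol x hr.le]; exact pow_ne_zero _ (by simpa using hr)

theorem Qc_vol_ne_top {n : ℕ} (x : ESp n) {r : ℝ} (hr : 0 < r) : volume (Qc x r) ≠ ⊤ := by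
  rw [Qc_vol x hr.le]; exact ENNReal.pow_ne_top ENNReal.ofReal_ne_top

theorem Qc_vol_scale {n : ℕ} (x y : ESp n) {r c : ℝ} (hr : 0 ≤ r) (hc : 0 ≤ c) :
    volume (Qc x (c * r)) = ENNReal.ofReal c ^ n * volume (Qc y r) := by
  rw [Qc_vol x (by positivity), Qc_vol y hr, ← mul_pow, ← ENNReal.ofReal_mul hc]
  congr 2; ring

theorem Qc_mono {n : ℕ} (x : ESp n) {r s : ℝ} (h : r ≤ s) : Qc x r ⊆ Qc x s :=
  fun _ hz i => (hz i).trans h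

theorem mem_Qc_of_dist {n : ℕ} {x z : ESp n} {r : ℝ} (h : dist z x ≤ r) : z ∈ Qc x r := by
  intro i
  refine le_trans ?_ h
  rw [dist_eq_norm]
  simpa using PiLp.norm_apply_le (z - x) i

theorem Qc_subset {n : ℕ} {x y : ESp n} {r s t : ℝ} (h : y ∈ Qc x s) (hst : r + s ≤ t) :
    Qc y r ⊆ Qc x t := by
  intro z hz i
  have h1 := hz i
  have h2 := h i
  calc |z i - x i| = |(z i - y i) + (y i - x i)| := by ring_nf
    _ ≤ _ := abs_add_le _ _
    _ ≤ t := by linarith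

structure A1p {n : ℕ} (W : ESp n → ℝ≥0∞) (C : ℝ≥0∞) : Prop where
  meas : Measurable W
  pos : ∀ᵐ z ∂(volume : Measure (ESp n)), W z ≠ 0
  fin : ∀ z, W z ≠ ⊤
  hC : C ≠ ⊤
  bound : ∀ x r, 0 < r → ∀ᵐ z ∂(volume : Measure (ESp n)), z ∈ Qc x r →
    wd W (Qc x r) ≤ C * volume (Qc x r) * W z

structure APc {n : ℕ} (Z : ESp n → ℝ≥0∞) (P : ℝ) (C : ℝ≥0∞) : Prop where
  meas : Measurable Z
  pos : ∀ᵐ z ∂(volume : Measure (ESp n)), Z z ≠ 0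
  fin : ∀ᵐ z ∂(volume : Measure (ESp n)), Z z ≠ ⊤
  hP : 1 < P
  hC : C ≠ ⊤
  bound : ∀ x r, 0 < r → wd Z (Qc x r) * (∫⁻ z in Qc x r, Z z ^ (-(1 / (P - 1)))) ^ (P - 1)
    ≤ C * volume (Qc x r) ^ P

structure APp {n : ℕ} (Z : ESp n → ℝ≥0∞) (P : ℝ) (C : ℝ≥0∞) : Prop where
  meas : Measurable Z
  pos : ∀ᵐ z ∂(volume : Measure (ESp n)), Z z ≠ 0
  hP : 1 < P
  hC : C ≠ ⊤
  fin : ∀ x r, 0 < r → wd Z (Qc x r) ≠ ⊤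
  bound : ∀ x r, 0 < r → ∀ E ⊆ Qc x r, MeasurableSet E →
    wd Z (Qc x r) * volume E ^ P ≤ C * volume (Qc x r) ^ P * wd Z E

theorem exists_of_ae_Qc {n : ℕ} {p : ESp n → Prop} (h : ∀ᵐ z ∂(volume : Measure (ESp n)), p z)
    (x : ESp n) {r : ℝ} (hr : 0 < r) : ∃ z ∈ Qc x r, p z := by
  by_contra hc
  push Not at hc
  have : volume (Qc x r) = 0 := measure_mono_null (fun z hz => hc z hz) h
  exact Qc_vol_ne_zero x hr this

theorem wd_pos {n : ℕ} {Z : ESp n → ℝ≥0∞} (hm : Measurable Z)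
    (h : ∀ᵐ z ∂(volume : Measure (ESp n)), Z z ≠ 0) {E : Set (ESp n)} (hE : MeasurableSet E)
    (hE0 : volume E ≠ 0) : wd Z E ≠ 0 := by
  rw [withDensity_apply _ hE]
  intro h0
  rw [lintegral_eq_zero_iff hm] at h0
  have h1 : ∀ᵐ z ∂(volume.restrict E), False := by
    filter_upwards [h0, ae_restrict_of_ae h] with z h2 h3 using h3 h2
  rw [Filter.eventually_false_iff_eq_bot, ae_eq_bot, Measure.restrict_eq_zero] at h1
  exact hE0 h1

namespace A1p
variable {n : ℕ} {W : ESp n → ℝ≥0∞} {C : ℝ≥0∞}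

theorem wd_fin (h : A1p W C) (x : ESp n) {r : ℝ} (hr : 0 < r) : wd W (Qc x r) ≠ ⊤ := by
  obtain ⟨z, hz, hb⟩ := exists_of_ae_Qc (h.bound x r hr) x hr
  refine ne_top_of_le_ne_top ?_ (hb hz)
  exact ENNReal.mul_ne_top (ENNReal.mul_ne_top h.hC (Qc_vol_ne_top x hr)) (h.fin z)

theorem sub (h : A1p W C) (x : ESp n) {r : ℝ} (hr : 0 < r) {E : Set (ESp n)} (hE : E ⊆ Qc x r)
    (hEm : MeasurableSet E) : wd W (Qc x r) * volume E ≤ C * volume (Qc x r) * wd W E := by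
  rw [withDensity_apply W hEm, ← lintegral_const_mul _ h.meas, ← setLIntegral_const]
  apply lintegral_mono_ae
  filter_upwards [ae_restrict_of_ae (h.bound x r hr), ae_restrict_mem hEm] with z h1 h2
  exact h1 (hE h2)

theorem one_le (h : A1p W C) : 1 ≤ C := by
  have h1 := h.sub (0 : ESp n) one_pos (subset_refl _) (Qc_meas _ _)
  have h2 := Qc_vol_ne_zero (0 : ESp n) one_pos
  have h3 := Qc_vol_ne_top (0 : ESp n) one_pos
  have h4 := h.wd_fin (0 : ESp n) one_pos
  have h5 := wd_pos h.meas h.pos (Qc_meas (0 : ESp n) 1) h2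
  have h6 : (wd W (Qc 0 1) * volume (Qc (0 : ESp n) 1)) * 1 ≤ (wd W (Qc 0 1) * volume (Qc (0 : ESp n) 1)) * C := by
    rw [mul_one]; refine h1.trans (le_of_eq (by ring))
  exact (ENNReal.mul_le_mul_iff_right (mul_ne_zero h5 h2) (ENNReal.mul_ne_top h4 h3)).1 h6

theorem doubling (h : A1p W C) (x : ESp n) {r : ℝ} (hr : 0 < r) {c : ℝ} (hc : 1 ≤ c) {E : Set (ESp n)}
    (hE : E ⊆ Qc x r) (hEm : MeasurableSet E) (hEv : volume (Qc x r) ≤ 2 * volume E) :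
    wd W (Qc x (c * r)) ≤ C * ENNReal.ofReal c ^ n * 2 * wd W E := by
  have h1 := h.sub x (r := c * r) (by positivity) (hE.trans (Qc_mono x (by nlinarith))) hEm
  have h0 : volume E ≠ 0 := fun h0 => Qc_vol_ne_zero x hr (by simpa [h0] using hEv)
  have ht : volume E ≠ ⊤ := ne_top_of_le_ne_top (Qc_vol_ne_top x hr) (measure_mono hE)
  rw [Qc_vol_scale x x hr.le (by linarith)] at h1
  have h6 : volume E * wd W (Qc x (c * r)) ≤ volume E * (C * ENNReal.ofReal c ^ n * 2 * wd W E) := by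
    calc _ = wd W (Qc x (c * r)) * volume E := by ring
      _ ≤ _ := h1
      _ ≤ C * (ENNReal.ofReal c ^ n * (2 * volume E)) * wd W E := by gcongr
      _ = _ := by ring
  exact (ENNReal.mul_le_mul_iff_right h0 ht).1 h6

end A1p

theorem vv_geom (θ A B : ℝ) (h0 : 0 < θ) (h1 : θ < 1) (hA : 1 < A) (hB : 0 < B) :
    ∃ δ : ℝ, 0 < δ ∧ ∃ K > 0, ∀ t : ℝ, 0 < t → t ≤ 1 →
      (∃ N : ℕ, A ^ N * (B * t) ≤ 1 ∧ θ ^ N ≤ K * t ^ δ) ∨ 1 ≤ K * t ^ δ := by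
  have hlA := Real.log_pos hA
  have hlθ := Real.log_neg h0 h1
  set δ := -Real.log θ / Real.log A with hδ
  have hδ0 : 0 < δ := div_pos (by linarith) hlA
  have hθ : θ = A ^ (-δ) := by
    rw [Real.rpow_def_of_pos (by linarith), hδ]
    rw [show Real.log A * -(-Real.log θ / Real.log A) = Real.log θ by field_simp, Real.exp_log h0]
  have hBp : 0 < B ^ δ := Real.rpow_pos_of_pos hB _
  have hA1 : 1 ≤ A ^ δ := Real.one_le_rpow hA.le hδ0.le
  refine ⟨δ, hδ0, A ^ δ * B ^ δ, by positivity, fun t ht ht1 => ?_⟩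
  have hBt : 0 < B * t := by positivity
  rcases le_or_gt (B * t) 1 with h | h
  · left
    obtain ⟨N, hN1, hN2⟩ := exists_nat_pow_near (x := (B * t)⁻¹) (one_le_inv₀ hBt |>.2 h) hA
    refine ⟨N, ?_, ?_⟩
    · calc A ^ N * (B * t) ≤ (B * t)⁻¹ * (B * t) := by gcongr
        _ = 1 := inv_mul_cancel₀ hBt.ne'
    · have hAN : 0 < A ^ (N + 1) := by positivity
      have h3 : (A ^ (N + 1))⁻¹ ≤ B * t := by
        rw [inv_le_comm₀ hAN hBt]; exact hN2.le
      calc θ ^ N = A ^ δ * ((A ^ (N + 1))⁻¹) ^ δ := by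
            have hA0 : 0 < A := by linarith
            rw [hθ, ← Real.rpow_natCast, ← Real.rpow_mul hA0.le, ← Real.rpow_natCast, ← Real.rpow_neg hA0.le, ← Real.rpow_mul hA0.le,
              ← Real.rpow_add hA0]
            congr 1; push_cast; ring
        _ ≤ A ^ δ * (B * t) ^ δ := by gcongr
        _ = _ := by rw [Real.mul_rpow hB.le ht.le]; ring
  · right
    calc (1 : ℝ) ≤ 1 * (B * t) ^ δ := by rw [one_mul]; exact Real.one_le_rpow h.le hδ0.le
      _ ≤ A ^ δ * (B * t) ^ δ := by gcongr
      _ = _ := by rw [Real.mul_rpow hB.le ht.le]; ring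

theorem A1p.decay {n : ℕ} {W : ESp n → ℝ≥0∞} {C : ℝ≥0∞} (h : A1p W C) :
    ∃ δ : ℝ, 0 < δ ∧ ∃ K : ℝ≥0∞, K ≠ ⊤ ∧ ∀ x r, 0 < r → ∀ E ⊆ Qc x r, MeasurableSet E →
      wd W E ≤ K * (volume E / volume (Qc x r)) ^ δ * wd W (Qc x r) := by
  set ν : Measure (Fin n → ℝ) := (wd W).map WithLp.ofLp with hν
  have hmeas : Measurable (WithLp.ofLp : ESp n → (Fin n → ℝ)) := (PiLp.volume_preserving_ofLp (Fin n)).measurable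
  have hνE : ∀ {E : Set (Fin n → ℝ)}, MeasurableSet E → ν E = wd W (WithLp.ofLp ⁻¹' E) := fun hE =>
    Measure.map_apply hmeas hE
  have hball : ∀ (x : Fin n → ℝ) (r : ℝ), 0 ≤ r → (WithLp.ofLp : ESp n → _) ⁻¹' Metric.closedBall x r = Qc (WithLp.toLp 2 x) r := by
    intro x r hr; rw [Qc_eq _ hr]
  set C' : ℝ≥0∞ := C * ENNReal.ofReal 5 ^ n * 2 + 2 with hC'
  have hC't : C' ≠ ⊤ := by
    have := h.hC
    rw [hC']
    exact ENNReal.add_ne_top.2 ⟨ENNReal.mul_ne_top (ENNReal.mul_ne_top h.hC (ENNReal.pow_ne_top ENNReal.ofReal_ne_top)) (by norm_num), by norm_num⟩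
  have hC'2 : 2 ≤ C' := le_add_self
  have hC'1 : 1 ≤ C' := le_trans (by norm_num) hC'2
  have hD := vv_decay ν (by
      refine Measure.AbsolutelyContinuous.mk fun s hs h0 => ?_
      rw [hνE hs]
      apply withDensity_absolutelyContinuous
      rw [vol_ofLp hs]; exact h0)
    (by
      intro x r
      rcases lt_or_ge r 0 with hr | hr
      · rw [Metric.closedBall_eq_empty.2 hr]; simp
      · have : ν (Metric.closedBall x r) ≤ ν (Metric.closedBall x (r + 1)) :=
          measure_mono (Metric.closedBall_subset_closedBall (by linarith))
        refine ne_top_of_le_ne_top ?_ this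
        rw [hνE Metric.isClosed_closedBall.measurableSet, hball _ _ (by linarith)]
        exact h.wd_fin _ (by linarith)) C' hC't hC'1
    (by
      intro x r hr E hE hEm hEv
      rw [hνE Metric.isClosed_closedBall.measurableSet, hball _ _ (by linarith), hνE hEm]
      have h1 := h.doubling (WithLp.toLp 2 x) hr (c := 5) (by norm_num) (E := WithLp.ofLp ⁻¹' E)
        (by rw [Qc_eq _ hr.le]; exact preimage_mono hE) (hmeas hEm)
        (by rw [vol_ofLp hEm, Qc_eq _ hr.le, vol_ofLp Metric.isClosed_closedBall.measurableSet]; exact hEv)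
      refine h1.trans ?_
      gcongr
      exact le_self_add)
  set θ : ℝ≥0∞ := 1 - C'⁻¹ with hθ
  have hθ1 : θ < 1 := ENNReal.sub_lt_self (by norm_num) (by norm_num) (ENNReal.inv_ne_zero.2 hC't)
  have hθ0 : 0 < θ := by
    rw [hθ, tsub_pos_iff_lt]
    exact (ENNReal.inv_le_inv.2 hC'2).trans_lt (by rw [ENNReal.inv_lt_one]; norm_num)
  have hθt : θ ≠ ⊤ := ne_top_of_lt hθ1
  have hθr : ENNReal.ofReal θ.toReal = θ := ENNReal.ofReal_toReal hθt
  obtain ⟨δ, hδ, K, hK, hG⟩ := vv_geom θ.toReal (2 * 20 ^ n) (2 ^ n) (ENNReal.toReal_pos hθ0.ne' hθt)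
    (by simpa using (ENNReal.toReal_lt_toReal hθt (by norm_num)).2 hθ1)
    (by have : (1 : ℝ) ≤ 20 ^ n := one_le_pow₀ (by norm_num)
        linarith) (by positivity)
  refine ⟨δ, hδ, ENNReal.ofReal K * (C * ENNReal.ofReal 2 ^ n * 2 + 1), ?_, ?_⟩
  · refine ENNReal.mul_ne_top ENNReal.ofReal_ne_top (ENNReal.add_ne_top.2 ⟨ENNReal.mul_ne_top (ENNReal.mul_ne_top h.hC (ENNReal.pow_ne_top ENNReal.ofReal_ne_top)) (by norm_num), by norm_num⟩)
  intro x r hr E hE hEm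
  have hQ0 := Qc_vol_ne_zero x hr
  have hQt := Qc_vol_ne_top x hr
  rcases eq_or_ne (volume E) 0 with hE0 | hE0
  · rw [withDensity_absolutelyContinuous volume W hE0]; exact zero_le
  have hEt : volume E ≠ ⊤ := ne_top_of_le_ne_top hQt (measure_mono hE)
  set T := volume E / volume (Qc x r) with hT
  have hTt : T ≠ ⊤ := ENNReal.div_ne_top hEt hQ0
  have hT0 : T ≠ 0 := ENNReal.div_ne_zero.2 ⟨hE0, hQt⟩
  have hT1 : T ≤ 1 := ENNReal.div_le_of_le_mul (by rw [one_mul]; exact measure_mono hE)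
  have hTr : ENNReal.ofReal T.toReal = T := ENNReal.ofReal_toReal hTt
  have hEv : volume E = T * volume (Qc x r) := (ENNReal.div_mul_cancel hQ0 hQt).symm
  have hKT : ENNReal.ofReal (K * T.toReal ^ δ) = ENNReal.ofReal K * T ^ δ := by
    rw [ENNReal.ofReal_mul hK.le, ← ENNReal.ofReal_rpow_of_pos (ENNReal.toReal_pos hT0 hTt), hTr]
  have hQ2 : wd W (Qc x (2 * r)) ≤ (C * ENNReal.ofReal 2 ^ n * 2 + 1) * wd W (Qc x r) := by
    refine (h.doubling x hr (c := 2) (by norm_num) (subset_refl _) (Qc_meas _ _) ?_).trans ?_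
    · rw [two_mul]; exact le_self_add
    · gcongr; exact le_self_add
  rcases hG T.toReal (ENNReal.toReal_pos hT0 hTt) (by simpa using (ENNReal.toReal_le_toReal hTt (by norm_num)).2 hT1) with ⟨N, hN1, hN2⟩ | h1
  · have hE' : (WithLp.ofLp : ESp n → (Fin n → ℝ)) ⁻¹' (WithLp.toLp 2 ⁻¹' E) = E := rfl
    have hEm' : MeasurableSet (WithLp.toLp 2 ⁻¹' E : Set (Fin n → ℝ)) :=
      (EuclideanSpace.volume_preserving_symm_measurableEquiv_toLp (Fin n)).symm.measurable hEm
    have hd := hD N (WithLp.ofLp x) r r hr (WithLp.toLp 2 ⁻¹' E) hEm' (by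
        intro z hz
        have h2 := hE hz
        rw [Qc_eq _ hr.le] at h2
        exact h2) (by
        rw [← vol_ofLp hEm', hE', hEv, Qc_vol x hr.le]
        have h3 := ENNReal.ofReal_le_ofReal hN1
        rw [ENNReal.ofReal_mul (by positivity), ENNReal.ofReal_mul (by positivity), hTr, ENNReal.ofReal_pow (by positivity),
          ENNReal.ofReal_mul (by positivity), ENNReal.ofReal_pow (by positivity), ENNReal.ofReal_pow (by positivity), ENNReal.ofReal_one] at h3
        rw [ENNReal.ofReal_mul (by positivity), mul_pow]
        calc _ = (2 * 20 ^ n) ^ N * (ENNReal.ofReal 2 ^ n * T) * ENNReal.ofReal r ^ n := by ring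
          _ ≤ 1 * ENNReal.ofReal r ^ n := by
            gcongr
            refine le_trans (le_of_eq ?_) h3
            simp
          _ = _ := one_mul _)
    rw [hνE hEm', hE', hνE Metric.isClosed_closedBall.measurableSet, hball _ _ (by linarith),
      show r + r = 2 * r by ring] at hd
    have h5 : θ ^ N ≤ ENNReal.ofReal K * T ^ δ := by
      rw [← hKT, ← hθr, ← ENNReal.ofReal_pow (by positivity)]
      exact ENNReal.ofReal_le_ofReal hN2
    calc wd W E ≤ θ ^ N * wd W (Qc x (2 * r)) := hd
      _ ≤ (ENNReal.ofReal K * T ^ δ) * ((C * ENNReal.ofReal 2 ^ n * 2 + 1) * wd W (Qc x r)) := by gcongr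
      _ = _ := by ring
  · have h3 := ENNReal.ofReal_le_ofReal h1
    rw [hKT, ENNReal.ofReal_one] at h3
    calc wd W E ≤ 1 * (1 * wd W (Qc x r)) := by rw [one_mul, one_mul]; exact measure_mono hE
      _ ≤ (ENNReal.ofReal K * T ^ δ) * ((C * ENNReal.ofReal 2 ^ n * 2 + 1) * wd W (Qc x r)) := by
        gcongr; exact le_add_self
      _ = _ := by ring

theorem APc.toAPp {n : ℕ} {Z : ESp n → ℝ≥0∞} {P : ℝ} {C : ℝ≥0∞} (h : APc Z P C) : APp Z P C := by
  have hP := h.hP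
  have hP0 : 0 < P - 1 := by linarith
  set s : ℝ := -(1 / (P - 1)) with hs
  have hs0 : s < 0 := by rw [hs]; simp; linarith
  have hYpos : ∀ x r, 0 < r → (∫⁻ z in Qc x r, Z z ^ s) ≠ 0 := by
    intro x r hr h0
    rw [lintegral_eq_zero_iff (h.meas.pow_const _)] at h0
    have h1 : ∀ᵐ z ∂(volume.restrict (Qc x r)), False := by
      filter_upwards [h0, ae_restrict_of_ae h.fin] with z h2 h3
      simp only [Pi.zero_apply, ENNReal.rpow_eq_zero_iff] at h2
      rcases h2 with ⟨-, h2⟩ | ⟨h2, -⟩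
      · linarith
      · exact h3 h2
    rw [Filter.eventually_false_iff_eq_bot, ae_eq_bot, Measure.restrict_eq_zero] at h1
    exact Qc_vol_ne_zero x hr h1
  refine ⟨h.meas, h.pos, h.hP, h.hC, ?_, ?_⟩
  · intro x r hr htop
    have h1 := h.bound x r hr
    rw [htop, ENNReal.top_mul] at h1
    · have : C * volume (Qc x r) ^ P < ⊤ := ENNReal.mul_lt_top h.hC.lt_top
        (ENNReal.rpow_lt_top_of_nonneg (by linarith) (Qc_vol_ne_top x hr))
      exact absurd (h1.trans_lt this) (lt_irrefl _)
    · intro h0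
      rw [ENNReal.rpow_eq_zero_iff] at h0
      rcases h0 with ⟨h0, -⟩ | ⟨-, h0⟩
      · exact hYpos x r hr h0
      · linarith
  · intro x r hr E hE hEm
    have hold : volume E ^ P ≤ wd Z E * (∫⁻ z in Qc x r, Z z ^ s) ^ (P - 1) := by
      have hconj : P.HolderConjugate (P / (P - 1)) := by
        have := Real.HolderConjugate.conjExponent hP
        simpa [Real.conjExponent] using this
      have h1 := ENNReal.lintegral_mul_le_Lp_mul_Lq (volume.restrict E) hconj
        (f := fun z => Z z ^ (1 / P)) (g := fun z => Z z ^ (-(1 / P)))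
        (h.meas.pow_const _).aemeasurable (h.meas.pow_const _).aemeasurable
      have h2 : ∫⁻ z in E, ((fun z => Z z ^ (1 / P)) * (fun z => Z z ^ (-(1 / P)))) z = volume E := by
        rw [← setLIntegral_one]
        apply lintegral_congr_ae
        filter_upwards [ae_restrict_of_ae h.pos, ae_restrict_of_ae h.fin] with z hz1 hz2
        simp only [Pi.mul_apply]
        rw [← ENNReal.rpow_add _ _ hz1 hz2]; simp
      have h3 : ∀ z, (Z z ^ (1 / P)) ^ P = Z z := by
        intro z; rw [← ENNReal.rpow_mul, one_div_mul_cancel (by linarith), ENNReal.rpow_one]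
      have h4 : ∀ z, (Z z ^ (-(1 / P))) ^ (P / (P - 1)) = Z z ^ s := by
        intro z; rw [← ENNReal.rpow_mul]; congr 1; rw [hs]
        have : P ≠ 0 := by linarith
        field_simp
      simp only [h2, h3, h4] at h1
      rw [withDensity_apply Z hEm]
      calc volume E ^ P ≤ ((∫⁻ z in E, Z z) ^ (1 / P) * (∫⁻ z in E, Z z ^ s) ^ (1 / (P / (P - 1)))) ^ P := by
            exact ENNReal.rpow_le_rpow h1 (by linarith)
        _ = (∫⁻ z in E, Z z) * (∫⁻ z in E, Z z ^ s) ^ (P - 1) := by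
            rw [ENNReal.mul_rpow_of_nonneg _ _ (by linarith), ← ENNReal.rpow_mul, ← ENNReal.rpow_mul,
              one_div_mul_cancel (by linarith), ENNReal.rpow_one]
            congr 2
            have : P ≠ 0 := by linarith
            field_simp
        _ ≤ _ := by
            gcongr
    calc wd Z (Qc x r) * volume E ^ P ≤ wd Z (Qc x r) * (wd Z E * (∫⁻ z in Qc x r, Z z ^ s) ^ (P - 1)) := by gcongr
      _ = (wd Z (Qc x r) * (∫⁻ z in Qc x r, Z z ^ s) ^ (P - 1)) * wd Z E := by ring
      _ ≤ _ := mul_le_mul_left (h.bound x r hr) _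

theorem APp.reverse {n : ℕ} (hn : 0 < n) {Z : ESp n → ℝ≥0∞} {P : ℝ} {C : ℝ≥0∞} (h : APp Z P C) :
    ∃ γ : ℝ≥0∞, γ < 1 ∧ γ ≠ 0 ∧ ∀ y r, 0 < r → wd Z (Qc y r) ≤ γ * wd Z (Qc y (2 * r)) := by
  set K : ℝ≥0∞ := C * 2 ^ P + 2 with hK
  have hKt : K ≠ ⊤ := ENNReal.add_ne_top.2 ⟨ENNReal.mul_ne_top h.hC (ENNReal.rpow_ne_top_of_nonneg (by linarith [h.hP]) (by norm_num)), by norm_num⟩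
  have hK2 : 2 ≤ K := le_add_self
  have hK0 : K ≠ 0 := fun h0 => by rw [h0] at hK2; norm_num at hK2
  refine ⟨1 - K⁻¹, ENNReal.sub_lt_self (by norm_num) (by norm_num) (ENNReal.inv_ne_zero.2 hKt), ?_, ?_⟩
  · rw [← pos_iff_ne_zero, tsub_pos_iff_lt]
    exact (ENNReal.inv_le_inv.2 hK2).trans_lt (by rw [ENNReal.inv_lt_one]; norm_num)
  intro y r hr
  have hr2 : 0 < 2 * r := by positivity
  set E := Qc y (2 * r) \ Qc y r with hE
  have hsub : Qc y r ⊆ Qc y (2 * r) := Qc_mono y (by linarith)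
  have hEm : MeasurableSet E := (Qc_meas _ _).diff (Qc_meas _ _)
  have hv : volume (Qc y (2 * r)) ≤ 2 * volume E := by
    have h1 : volume (Qc y r) + volume E = volume (Qc y (2 * r)) := by
      rw [hE, ← measure_inter_add_sdiff (Qc y (2 * r)) (Qc_meas y r), inter_eq_self_of_subset_right hsub]
    have h2 : 2 * volume (Qc y r) ≤ volume (Qc y (2 * r)) := by
      rw [Qc_vol_scale y y hr.le (by norm_num)]
      gcongr
      calc (2 : ℝ≥0∞) = 2 ^ 1 := by norm_num
        _ ≤ 2 ^ n := pow_le_pow_right₀ (by norm_num) hn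
        _ = _ := by simp
    rw [← h1, two_mul] at h2
    have h3 : volume (Qc y r) ≤ volume E :=
      (ENNReal.add_le_add_iff_left (Qc_vol_ne_top y hr)).1 h2
    rw [← h1, two_mul]; gcongr
  have hP := h.hP
  have hb := h.bound y (2 * r) hr2 E sdiff_subset hEm
  have hV0 := Qc_vol_ne_zero y hr2
  have hVt := Qc_vol_ne_top y hr2
  have h1 : wd Z (Qc y (2 * r)) ≤ K * wd Z E := by
    have hVP0 : volume (Qc y (2 * r)) ^ P ≠ 0 := by simp [ENNReal.rpow_eq_zero_iff, hV0, hVt]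
    have hVPt : volume (Qc y (2 * r)) ^ P ≠ ⊤ := ENNReal.rpow_ne_top_of_nonneg (by linarith) hVt
    rw [← ENNReal.mul_le_mul_iff_right hVP0 hVPt]
    calc volume (Qc y (2 * r)) ^ P * wd Z (Qc y (2 * r)) ≤ (2 * volume E) ^ P * wd Z (Qc y (2 * r)) := by
          gcongr
      _ = 2 ^ P * (wd Z (Qc y (2 * r)) * volume E ^ P) := by
          rw [ENNReal.mul_rpow_of_nonneg _ _ (by linarith)]; ring
      _ ≤ 2 ^ P * (C * volume (Qc y (2 * r)) ^ P * wd Z E) := by gcongr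
      _ = volume (Qc y (2 * r)) ^ P * ((C * 2 ^ P) * wd Z E) := by ring
      _ ≤ _ := by gcongr; exact le_self_add
  have h2 : K⁻¹ * wd Z (Qc y (2 * r)) ≤ wd Z E := by
    rw [ENNReal.inv_mul_le_iff hK0 hKt]; exact h1
  have h3 : wd Z (Qc y r) + wd Z E = wd Z (Qc y (2 * r)) := by
    rw [hE, ← measure_inter_add_sdiff (Qc y (2 * r)) (Qc_meas y r), inter_eq_self_of_subset_right hsub]
  have hEt : wd Z E ≠ ⊤ := ne_top_of_le_ne_top (h.fin y _ hr2) (measure_mono sdiff_subset)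
  rw [ENNReal.sub_mul (fun _ _ => h.fin y _ hr2), one_mul]
  rw [ENNReal.eq_sub_of_add_eq hEt h3]
  exact tsub_le_tsub_left h2 _

theorem APc.geom {n m : ℕ} (hm : 0 < m) {Z : Fin m → ESp n → ℝ≥0∞} {P : ℝ} {C : Fin m → ℝ≥0∞}
    (h : ∀ i, APc (Z i) P (C i)) :
    APc (fun x => ∏ i, Z i x ^ ((m : ℝ)⁻¹)) P (∏ i, C i ^ ((m : ℝ)⁻¹)) := by
  have hm' : (0 : ℝ) < (m : ℝ)⁻¹ := by positivity
  have hP : 1 < P := (h ⟨0, hm⟩).hP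
  have hsum : ∑ _i : Fin m, ((m : ℝ)⁻¹) = 1 := by
    simp; field_simp
  have hpos : ∀ᵐ z ∂(volume : Measure (ESp n)), ∀ i, Z i z ≠ 0 := ae_all_iff.2 fun i => (h i).pos
  have hfin : ∀ᵐ z ∂(volume : Measure (ESp n)), ∀ i, Z i z ≠ ⊤ := ae_all_iff.2 fun i => (h i).fin
  refine ⟨?_, ?_, ?_, hP, ?_, ?_⟩
  · exact Finset.measurable_prod _ fun i _ => (h i).meas.pow_const _
  · filter_upwards [hpos, hfin] with z h1 h2
    rw [Finset.prod_ne_zero_iff]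
    intro i _
    simp [ENNReal.rpow_eq_zero_iff, h1 i, h2 i]
  · filter_upwards [hfin] with z h2
    exact ENNReal.prod_ne_top fun i _ => ENNReal.rpow_ne_top_of_nonneg hm'.le (h2 i)
  · exact ENNReal.prod_ne_top fun i _ => ENNReal.rpow_ne_top_of_nonneg hm'.le (h i).hC
  · intro x r hr
    set s : ℝ := -(1 / (P - 1)) with hs
    have h1 : wd (fun x => ∏ i, Z i x ^ ((m : ℝ)⁻¹)) (Qc x r) ≤ ∏ i, (wd (Z i) (Qc x r)) ^ ((m : ℝ)⁻¹) := by
      simp only [withDensity_apply _ (Qc_meas x r)]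
      exact ENNReal.lintegral_prod_norm_pow_le _ (fun i _ => (h i).meas.aemeasurable) hsum (fun i _ => hm'.le)
    have h2 : (∫⁻ z in Qc x r, (∏ i, Z i z ^ ((m : ℝ)⁻¹)) ^ s) ≤ ∏ i, (∫⁻ z in Qc x r, Z i z ^ s) ^ ((m : ℝ)⁻¹) := by
      calc _ = ∫⁻ z in Qc x r, ∏ i, (Z i z ^ s) ^ ((m : ℝ)⁻¹) := by
            apply lintegral_congr_ae
            filter_upwards [ae_restrict_of_ae hfin] with z hz
            rw [← ENNReal.prod_rpow_of_ne_top (fun i _ => ENNReal.rpow_ne_top_of_nonneg hm'.le (hz i))]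
            refine Finset.prod_congr rfl fun i _ => ?_
            rw [← ENNReal.rpow_mul, ← ENNReal.rpow_mul, mul_comm]
        _ ≤ _ := ENNReal.lintegral_prod_norm_pow_le _ (fun i _ => ((h i).meas.pow_const _).aemeasurable) hsum (fun i _ => hm'.le)
    calc _ ≤ (∏ i, (wd (Z i) (Qc x r)) ^ ((m : ℝ)⁻¹)) * (∏ i, (∫⁻ z in Qc x r, Z i z ^ s) ^ ((m : ℝ)⁻¹)) ^ (P - 1) := by
          gcongr
      _ = ∏ i, (wd (Z i) (Qc x r) * (∫⁻ z in Qc x r, Z i z ^ s) ^ (P - 1)) ^ ((m : ℝ)⁻¹) := by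
          rw [← ENNReal.prod_rpow_of_nonneg (by linarith), ← Finset.prod_mul_distrib]
          refine Finset.prod_congr rfl fun i _ => ?_
          rw [ENNReal.mul_rpow_of_nonneg _ _ hm'.le, ← ENNReal.rpow_mul, ← ENNReal.rpow_mul, mul_comm (P - 1)]
      _ ≤ ∏ i, (C i * volume (Qc x r) ^ P) ^ ((m : ℝ)⁻¹) := by
          apply Finset.prod_le_prod'
          intro i _
          exact ENNReal.rpow_le_rpow ((h i).bound x r hr) hm'.le
      _ = _ := by
          simp only [ENNReal.mul_rpow_of_nonneg _ _ hm'.le]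
          rw [Finset.prod_mul_distrib]
          congr 1
          rw [Finset.prod_const, ← ENNReal.rpow_natCast, ← ENNReal.rpow_mul]
          simp; rw [inv_mul_cancel₀ (by positivity), ENNReal.rpow_one]

theorem A1p.toAPc {n : ℕ} {W : ESp n → ℝ≥0∞} {C : ℝ≥0∞} (h : A1p W C) {P : ℝ} (hP : 1 < P) : APc W P C := by
  refine ⟨h.meas, h.pos, Filter.Eventually.of_forall h.fin, hP, h.hC, fun x r hr => ?_⟩
  set s : ℝ := -(1 / (P - 1)) with hs
  have hs0 : 0 < 1 / (P - 1) := by have : 0 < P - 1 := by linarith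
                                   positivity
  have hV0 := Qc_vol_ne_zero x hr
  have hVt := Qc_vol_ne_top x hr
  have hW0 := wd_pos h.meas h.pos (Qc_meas x r) hV0
  have hWt := h.wd_fin x hr
  set X := wd W (Qc x r) with hX
  set V := volume (Qc x r) with hV
  have hC0 : C ≠ 0 := fun h0 => by have := h.one_le; rw [h0] at this; norm_num at this
  have hCV0 : C * V ≠ 0 := mul_ne_zero hC0 hV0
  have hCVt : C * V ≠ ⊤ := ENNReal.mul_ne_top h.hC hVt
  have h1 : ∀ᵐ z ∂(volume.restrict (Qc x r)), W z ^ s ≤ (X / (C * V)) ^ s := by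
    filter_upwards [ae_restrict_of_ae (h.bound x r hr), ae_restrict_mem (Qc_meas x r)] with z hz1 hz2
    rw [hs, ENNReal.rpow_neg, ENNReal.rpow_neg, ENNReal.inv_le_inv]
    apply ENNReal.rpow_le_rpow _ hs0.le
    exact ENNReal.div_le_of_le_mul' (hz1 hz2)
  have h2 : (∫⁻ z in Qc x r, W z ^ s) ≤ (X / (C * V)) ^ s * V := by
    refine (lintegral_mono_ae h1).trans ?_
    rw [setLIntegral_const]
  have hXX : X / (C * V) ≠ 0 := ENNReal.div_ne_zero.2 ⟨hW0, hCVt⟩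
  have hXXt : X / (C * V) ≠ ⊤ := ENNReal.div_ne_top hWt hCV0
  calc X * (∫⁻ z in Qc x r, W z ^ s) ^ (P - 1) ≤ X * ((X / (C * V)) ^ s * V) ^ (P - 1) := by
        gcongr
    _ = X * ((X / (C * V))⁻¹ * V ^ (P - 1)) := by
        rw [ENNReal.mul_rpow_of_nonneg _ _ (by linarith), ← ENNReal.rpow_mul,
          show s * (P - 1) = -1 by rw [hs]; have : P - 1 ≠ 0 := by linarith
                                   field_simp, ENNReal.rpow_neg_one]
    _ = (X * X⁻¹) * (C * (V * V ^ (P - 1))) := by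
        rw [ENNReal.inv_div (Or.inl hCVt) (Or.inl hCV0), ENNReal.div_eq_inv_mul]; ring
    _ = C * V ^ P := by
        rw [ENNReal.mul_inv_cancel hW0 hWt, one_mul]
        congr 1
        nth_rewrite 1 [← ENNReal.rpow_one V]
        rw [← ENNReal.rpow_add _ _ hV0 hVt]; congr 1; ring
    _ ≤ _ := le_rfl

theorem A1p.of_IsA1 {n : ℕ} {w : ESp n → ℝ} (hm : Measurable w)
    (hp : ∀ᵐ x ∂(volume : Measure (ESp n)), 0 < w x) (h : IsA1 w) :
    ∃ C, A1p (fun x => ENNReal.ofReal (w x)) C := by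
  obtain ⟨C, hC, h⟩ := h
  refine ⟨C, by fun_prop, ?_, fun z => ENNReal.ofReal_ne_top, hC.ne, ?_⟩
  · filter_upwards [hp] with x hx
    simpa using hx
  · intro x r hr
    have h1 := h _ (Qc_isCube x hr)
    have h2 := ae_essInf_le (f := fun x => ENNReal.ofReal (w x)) (μ := volume.restrict (Qc x r))
    rw [ae_restrict_iff' (Qc_meas x r)] at h2
    filter_upwards [h2] with z hz hzQ
    rw [withDensity_apply _ (Qc_meas x r)]
    rw [wMeas, ENNReal.inv_mul_le_iff (Qc_vol_ne_zero x hr) (Qc_vol_ne_top x hr)] at h1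
    refine h1.trans ?_
    calc volume (Qc x r) * (C * essInf (fun x => ENNReal.ofReal (w x)) (volume.restrict (Qc x r)))
        ≤ volume (Qc x r) * (C * ENNReal.ofReal (w z)) := by gcongr; exact hz hzQ
      _ = _ := by ring

theorem APc.of_IsAp {n : ℕ} {w : ESp n → ℝ} (hm : Measurable w)
    (hp : ∀ᵐ x ∂(volume : Measure (ESp n)), 0 < w x) {P : ℝ} (hP : 1 < P) (h : IsAp w P) :
    ∃ C, APc (fun x => ENNReal.ofReal (w x)) P C := by
  obtain ⟨C, hC, h⟩ := h
  refine ⟨C, by fun_prop, ?_, Filter.Eventually.of_forall fun z => ENNReal.ofReal_ne_top, hP, hC.ne, ?_⟩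
  · filter_upwards [hp] with x hx
    simpa using hx
  · intro x r hr
    have h1 := h _ (Qc_isCube x hr)
    have hV0 := Qc_vol_ne_zero x hr
    have hVt := Qc_vol_ne_top x hr
    have hP1 : P - 1 ≠ 0 := by linarith
    rw [withDensity_apply _ (Qc_meas x r)]
    rw [wMeas, show 1 - P / (P - 1) = -(1 / (P - 1)) by field_simp; ring] at h1
    set V := volume (Qc x r)
    set Y := ∫⁻ z in Qc x r, ENNReal.ofReal (w z) ^ (-(1 / (P - 1)))
    set X := ∫⁻ z in Qc x r, ENNReal.ofReal (w z)
    have hVP : V ^ P = V * V ^ (P - 1) := by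
      nth_rewrite 2 [← ENNReal.rpow_one V]
      rw [← ENNReal.rpow_add _ _ hV0 hVt]; congr 1; ring
    have h2 : V⁻¹ * V = 1 := ENNReal.inv_mul_cancel hV0 hVt
    calc X * Y ^ (P - 1) = (V⁻¹ * X * (V⁻¹ * Y) ^ (P - 1)) * V ^ P := by
          rw [hVP, ENNReal.mul_rpow_of_nonneg _ _ (by linarith)]
          calc X * Y ^ (P - 1) = (V⁻¹ * V) * X * (((V⁻¹ * V) ^ (P - 1)) * Y ^ (P - 1)) := by rw [h2]; simp
            _ = _ := by rw [ENNReal.mul_rpow_of_nonneg _ _ (by linarith)]; ring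
      _ ≤ _ := by gcongr

theorem APc.of_IsAinfty {n : ℕ} {w : ESp n → ℝ} (hm : Measurable w)
    (hp : ∀ᵐ x ∂(volume : Measure (ESp n)), 0 < w x) (h : IsAinfty w) :
    ∃ P C, APc (fun x => ENNReal.ofReal (w x)) P C := by
  rcases h with h | ⟨P, hP, h⟩
  · obtain ⟨C, hC⟩ := A1p.of_IsA1 hm hp h
    exact ⟨2, C, hC.toAPc (by norm_num)⟩
  · obtain ⟨C, hC⟩ := APc.of_IsAp hm hp hP h
    exact ⟨P, C, hC⟩

theorem vv_sum {X : Type*} [MeasurableSpace X] (μ : Measure X) (E : ℤ → Set X) (c : ℤ → ℝ≥0∞)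
    (hc0 : ∀ k, c k ≠ 0) (hct : ∀ k, c k ≠ ⊤) (L γ : ℝ≥0∞) (hL : L ≠ ⊤) (hγ : γ < 1)
    (hc : ∀ k (j : ℕ), c k ≤ L * γ ^ j * c (k + j)) (a : ℝ) (ha : 0 < a) (M : ℝ≥0∞)
    (h1 : ∀ k, μ (E k) ≤ M * c k ^ a) (h2 : ∀ k, μ (E k) ≤ M * (c k)⁻¹ ^ a) :
    μ (⋃ k, E k) ≤ 2 * L ^ a * (1 - γ ^ a)⁻¹ * M := by
  have hlim : Filter.Tendsto (fun j : ℕ => L * γ ^ j) Filter.atTop (nhds 0) := by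
    have := ENNReal.Tendsto.const_mul (a := L) (ENNReal.tendsto_pow_atTop_nhds_zero_of_lt_one hγ) (Or.inr hL)
    simpa using this
  have hlow : ∃ k, c k ≤ 1 := by
    have h3 : Filter.Tendsto (fun j : ℕ => L * γ ^ j * c 0) Filter.atTop (nhds 0) := by
      have := ENNReal.Tendsto.mul_const (b := c 0) hlim (Or.inr (hct 0))
      simpa using this
    obtain ⟨j, hj⟩ := ((tendsto_order.1 h3).2 1 one_pos).exists
    refine ⟨-j, (hc (-j) j).trans ?_⟩
    rw [neg_add_cancel]; exact hj.le
  have hup : ∃ b : ℤ, ∀ z, c z ≤ 1 → z ≤ b := by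
    obtain ⟨J, hJ⟩ := Filter.eventually_atTop.1 ((tendsto_order.1 hlim).2 (c 0) (pos_iff_ne_zero.2 (hc0 0)))
    refine ⟨J, fun z hz => ?_⟩
    by_contra hlt
    push Not at hlt
    obtain ⟨j, rfl⟩ := Int.eq_ofNat_of_zero_le (show 0 ≤ z by omega)
    have h4 := hc 0 j
    rw [zero_add] at h4
    have h5 : c 0 ≤ L * γ ^ j * 1 := h4.trans (by gcongr)
    rw [mul_one] at h5
    exact absurd (hJ j (by omega)) (not_lt.2 h5)
  obtain ⟨k0, hk0, hk0'⟩ := Int.exists_greatest_of_bdd hup hlow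
  have hk1 : 1 < c (k0 + 1) := by
    by_contra h; push Not at h
    have := hk0' _ h; omega
  have hgeo : ∑' j : ℕ, M * (L * γ ^ j) ^ a = L ^ a * (1 - γ ^ a)⁻¹ * M := by
    rw [ENNReal.tsum_mul_left]
    have : ∀ j : ℕ, (L * γ ^ j) ^ a = L ^ a * (γ ^ a) ^ j := by
      intro j
      rw [ENNReal.mul_rpow_of_nonneg _ _ ha.le, ← ENNReal.rpow_natCast, ← ENNReal.rpow_natCast, ← ENNReal.rpow_mul, ← ENNReal.rpow_mul, mul_comm (j : ℝ)]
    simp only [this]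
    rw [ENNReal.tsum_mul_left, ENNReal.tsum_geometric]; ring
  have hA : μ (⋃ j : ℕ, E (k0 - j)) ≤ L ^ a * (1 - γ ^ a)⁻¹ * M := by
    rw [← hgeo]
    refine (measure_iUnion_le _).trans (ENNReal.tsum_le_tsum fun j => (h1 _).trans ?_)
    gcongr
    refine (hc _ j).trans ?_
    rw [sub_add_cancel]
    calc L * γ ^ j * c k0 ≤ L * γ ^ j * 1 := by gcongr
      _ = _ := mul_one _
  have hB : μ (⋃ j : ℕ, E (k0 + 1 + j)) ≤ L ^ a * (1 - γ ^ a)⁻¹ * M := by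
    rw [← hgeo]
    refine (measure_iUnion_le _).trans (ENNReal.tsum_le_tsum fun j => (h2 _).trans ?_)
    gcongr
    have h3 := hk1.le.trans (hc _ j)
    calc (c (k0 + 1 + j))⁻¹ = (c (k0 + 1 + j))⁻¹ * 1 := (mul_one _).symm
      _ ≤ (c (k0 + 1 + j))⁻¹ * (L * γ ^ j * c (k0 + 1 + j)) := by gcongr
      _ = ((c (k0 + 1 + j))⁻¹ * c (k0 + 1 + j)) * (L * γ ^ j) := by ring
      _ = _ := by rw [ENNReal.inv_mul_cancel (hc0 _) (hct _), one_mul]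
  calc μ (⋃ k, E k) ≤ μ ((⋃ j : ℕ, E (k0 - j)) ∪ (⋃ j : ℕ, E (k0 + 1 + j))) := by
        apply measure_mono
        intro x hx
        obtain ⟨k, hk⟩ := mem_iUnion.1 hx
        rcases le_or_gt k k0 with h | h
        · left
          refine mem_iUnion.2 ⟨(k0 - k).toNat, ?_⟩
          rwa [Int.toNat_of_nonneg (by omega), show k0 - (k0 - k) = k by ring]
        · right
          refine mem_iUnion.2 ⟨(k - (k0 + 1)).toNat, ?_⟩
          rwa [Int.toNat_of_nonneg (by omega), show k0 + 1 + (k - (k0 + 1)) = k by ring]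
    _ ≤ _ := measure_union_le _ _
    _ ≤ _ := add_le_add hA hB
    _ = _ := by ring

theorem vv_jensen {n : ℕ} {W : ESp n → ℝ≥0∞} (hW : Measurable W) {θ : ℝ} (h0 : 0 ≤ θ) (h1 : θ ≤ 1)
    (Q : Set (ESp n)) : ∫⁻ x in Q, W x ^ θ ≤ (wd W Q) ^ θ * volume Q ^ (1 - θ) := by
  have := ENNReal.lintegral_mul_norm_pow_le (μ := volume.restrict Q) (f := W) (g := fun _ => 1)
    hW.aemeasurable aemeasurable_const h0 (sub_nonneg.2 h1) (by ring)
  rw [withDensity_apply']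
  simpa using this

theorem vv_cube {n : ℕ} {W Z : ESp n → ℝ≥0∞} {C1 C2 : ℝ≥0∞} {P : ℝ} (hW : A1p W C1) (hZ : APp Z P C2)
    {θ : ℝ} (hθ0 : 0 ≤ θ) (hθ1 : θ ≤ 1) :
    ∃ a : ℝ, 0 < a ∧ ∃ K : ℝ≥0∞, K ≠ ⊤ ∧ ∀ y r, 0 < r → ∀ b : ℝ≥0∞, b ≠ 0 → b ≠ ⊤ → ∀ c : ℝ≥0∞,
      c = wd Z (Qc y r) / (b * ((wd W (Qc y r)) ^ θ * volume (Qc y r) ^ (1 - θ))) →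
      wd (fun x => W x ^ (1 - θ) * Z x) (Qc y r ∩ {x | Z x < b * W x ^ θ}) ≤ K * (b * wd W (Qc y r)) * c ^ a ∧
      wd (fun x => W x ^ (1 - θ) * Z x) (Qc y r ∩ {x | Z x < b * W x ^ θ}) ≤ K * (b * wd W (Qc y r)) * c⁻¹ ^ a := by
  obtain ⟨δ, hδ, K0, hK0, hdec⟩ := hW.decay
  have hP := hZ.hP
  have hP0 : 0 < P := by linarith
  set a := min (1 / 2) (min (δ / 2) (δ / P)) with ha
  have ha0 : 0 < a := lt_min (by norm_num) (lt_min (by positivity) (by positivity))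
  have ha1 : a ≤ 1 / 2 := min_le_left _ _
  have ha2 : a ≤ δ / 2 := (min_le_right _ _).trans (min_le_left _ _)
  have ha3 : a ≤ δ / P := (min_le_right _ _).trans (min_le_right _ _)
  have hWm := hW.meas
  have hZm := hZ.meas
  refine ⟨a, ha0, 1 + K0 + K0 * C2 ^ (δ / P), ?_, ?_⟩
  · exact ENNReal.add_ne_top.2 ⟨ENNReal.add_ne_top.2 ⟨by norm_num, hK0⟩, ENNReal.mul_ne_top hK0 (ENNReal.rpow_ne_top_of_nonneg (by positivity) hZ.hC)⟩
  intro y r hr b hb0 hbt c hc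
  set Q := Qc y r with hQ
  have hQm : MeasurableSet Q := Qc_meas y r
  have hV0 : volume Q ≠ 0 := Qc_vol_ne_zero y hr
  have hVt : volume Q ≠ ⊤ := Qc_vol_ne_top y hr
  have hX0 : wd W Q ≠ 0 := wd_pos hWm hW.pos hQm hV0
  have hXt : wd W Q ≠ ⊤ := hW.wd_fin y hr
  have hZ0 : wd Z Q ≠ 0 := wd_pos hZm hZ.pos hQm hV0
  have hZt : wd Z Q ≠ ⊤ := hZ.fin y r hr
  set X := wd W Q with hX
  set V := volume Q with hV
  set J := X ^ θ * V ^ (1 - θ) with hJ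
  have hJ0 : J ≠ 0 := mul_ne_zero (by simp [ENNReal.rpow_eq_zero_iff, hX0, hXt]) (by simp [ENNReal.rpow_eq_zero_iff, hV0, hVt])
  have hJt : J ≠ ⊤ := ENNReal.mul_ne_top (ENNReal.rpow_ne_top_of_nonneg hθ0 hXt) (ENNReal.rpow_ne_top_of_nonneg (by linarith) hVt)
  have hd0 : b * J ≠ 0 := mul_ne_zero hb0 hJ0
  have hdt : b * J ≠ ⊤ := ENNReal.mul_ne_top hbt hJt
  have hc0 : c ≠ 0 := by rw [hc]; exact ENNReal.div_ne_zero.2 ⟨hZ0, hdt⟩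
  have hct : c ≠ ⊤ := by rw [hc]; exact ENNReal.div_ne_top hZt hd0
  set D : ESp n → ℝ≥0∞ := fun x => W x ^ (1 - θ) * Z x with hD
  have hDm : Measurable D := (hWm.pow_const _).mul hZm
  set S : Set (ESp n) := {x | Z x < b * W x ^ θ} with hS
  have hSm : MeasurableSet S := measurableSet_lt hZm ((hWm.pow_const _).const_mul _)
  -- basic bound
  have hbasic : ∀ F ⊆ S, MeasurableSet F → wd D F ≤ b * wd W F := by
    intro F hF hFm
    rw [withDensity_apply _ hFm, withDensity_apply _ hFm, ← lintegral_const_mul _ hWm]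
    refine setLIntegral_mono' hFm fun x hx => ?_
    have : W x = W x ^ (1 - θ) * W x ^ θ := by
      rw [← ENNReal.rpow_add_of_nonneg _ _ (by linarith) hθ0]; simp
    calc D x ≤ W x ^ (1 - θ) * (b * W x ^ θ) := by
          simp only [hD]; gcongr; exact (hF hx).le
      _ = b * (W x ^ (1 - θ) * W x ^ θ) := by ring
      _ = _ := by rw [← this]
  have hQSm : MeasurableSet (Q ∩ S) := hQm.inter hSm
  have htriv : wd D (Q ∩ S) ≤ b * X :=
    (hbasic _ inter_subset_right hQSm).trans (mul_le_mul_right (measure_mono inter_subset_left) _)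
  set K := 1 + K0 + K0 * C2 ^ (δ / P) with hK
  have hK1 : 1 ≤ K := by rw [hK, add_assoc]; exact le_self_add
  have small : c ≤ 1 → wd D (Q ∩ S) ≤ K * (b * X) * c ^ a := by
    intro hc1
    set l : ℝ≥0∞ := c ^ (1 / 2 : ℝ) * (b * (X ^ θ * V ^ (-θ))) with hl
    set T : Set (ESp n) := {x | Z x ≤ l} with hT
    have hTm : MeasurableSet T := measurableSet_le hZm measurable_const
    have hsplit : wd D (Q ∩ S) ≤ wd D (Q ∩ T) + wd D ((Q ∩ S) \ T) := by
      refine (measure_mono ?_).trans (measure_union_le _ _)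
      intro x hx
      by_cases h : x ∈ T
      · exact Or.inl ⟨hx.1, h⟩
      · exact Or.inr ⟨hx, h⟩
    have hp1 : wd D (Q ∩ T) ≤ c ^ (1 / 2 : ℝ) * (b * X) := by
      rw [withDensity_apply _ (hQm.inter hTm)]
      calc ∫⁻ x in Q ∩ T, D x ≤ ∫⁻ x in Q ∩ T, l * W x ^ (1 - θ) := by
            refine setLIntegral_mono' (hQm.inter hTm) fun x hx => ?_
            simp only [hD]; rw [mul_comm]
            gcongr; exact hx.2
        _ ≤ ∫⁻ x in Q, l * W x ^ (1 - θ) := lintegral_mono_set inter_subset_left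
        _ = l * ∫⁻ x in Q, W x ^ (1 - θ) := lintegral_const_mul _ (hWm.pow_const _)
        _ ≤ l * (X ^ (1 - θ) * V ^ (1 - (1 - θ))) := by
            gcongr; exact vv_jensen hWm (by linarith) (by linarith) Q
        _ = c ^ (1 / 2 : ℝ) * (b * ((X ^ θ * X ^ (1 - θ)) * (V ^ (-θ) * V ^ (1 - (1 - θ))))) := by
            rw [hl]; ring
        _ = _ := by
            rw [← ENNReal.rpow_add _ _ hX0 hXt, ← ENNReal.rpow_add _ _ hV0 hVt]
            simp
    have hp2 : wd D ((Q ∩ S) \ T) ≤ b * (K0 * (c ^ (1 / 2 : ℝ)) ^ δ * X) := by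
      have hFm : MeasurableSet ((Q ∩ S) \ T) := hQSm.diff hTm
      have hFQ : (Q ∩ S) \ T ⊆ Q := fun x hx => hx.1.1
      refine (hbasic _ (fun x hx => hx.1.2) hFm).trans ?_
      gcongr
      refine (hdec y r hr _ hFQ hFm).trans ?_
      gcongr
      have hmark : l * volume ((Q ∩ S) \ T) ≤ wd Z Q := by
        calc l * volume ((Q ∩ S) \ T) = ∫⁻ x in (Q ∩ S) \ T, l := by rw [setLIntegral_const]
          _ ≤ ∫⁻ x in (Q ∩ S) \ T, Z x := by
              refine setLIntegral_mono' hFm fun x hx => ?_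
              have := hx.2
              simp only [hT, mem_setOf_eq, not_le] at this
              exact this.le
          _ ≤ ∫⁻ x in Q, Z x := lintegral_mono_set hFQ
          _ = _ := by rw [withDensity_apply _ hQm]
      have hZc : wd Z Q = c * (b * J) := by
        rw [hc]; exact (ENNReal.div_mul_cancel hd0 hdt).symm
      have hJV : J = (X ^ θ * V ^ (-θ)) * V := by
        rw [hJ, mul_assoc]; congr 1
        nth_rewrite 3 [← ENNReal.rpow_one V]
        rw [← ENNReal.rpow_add _ _ hV0 hVt]; congr 1; ring
      have hcc : c = c ^ (1 / 2 : ℝ) * c ^ (1 / 2 : ℝ) := by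
        rw [← ENNReal.rpow_add _ _ hc0 hct]; norm_num
      have hsq0 : c ^ (1 / 2 : ℝ) ≠ 0 := by simp [ENNReal.rpow_eq_zero_iff, hc0]
      have hsqt : c ^ (1 / 2 : ℝ) ≠ ⊤ := ENNReal.rpow_ne_top_of_nonneg (by norm_num) hct
      have hl0 : l ≠ 0 := mul_ne_zero hsq0 (mul_ne_zero hb0 (by
        intro h0; rw [h0, zero_mul] at hJV; exact hJ0 hJV))
      have hlt : l ≠ ⊤ := ENNReal.mul_ne_top hsqt (ENNReal.mul_ne_top hbt (ENNReal.mul_ne_top (ENNReal.rpow_ne_top_of_nonneg hθ0 hXt) (by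
        simp [ENNReal.rpow_eq_top_iff, hV0, hVt])))
      apply ENNReal.div_le_of_le_mul
      rw [← ENNReal.mul_le_mul_iff_right hl0 hlt]
      refine hmark.trans (le_of_eq ?_)
      rw [hZc, hJV, hl]
      nth_rewrite 1 [hcc]; ring
    have hca1 : c ^ (1 / 2 : ℝ) ≤ c ^ a := ENNReal.rpow_le_rpow_of_exponent_ge hc1 ha1
    have hca2 : (c ^ (1 / 2 : ℝ)) ^ δ ≤ c ^ a := by
      rw [← ENNReal.rpow_mul]; exact ENNReal.rpow_le_rpow_of_exponent_ge hc1 (by linarith)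
    calc wd D (Q ∩ S) ≤ c ^ (1 / 2 : ℝ) * (b * X) + b * (K0 * (c ^ (1 / 2 : ℝ)) ^ δ * X) := hsplit.trans (add_le_add hp1 hp2)
      _ ≤ c ^ a * (b * X) + b * (K0 * c ^ a * X) := by gcongr
      _ = (1 + K0) * (b * X) * c ^ a := by ring
      _ ≤ _ := by gcongr; exact le_self_add
  have large : 1 ≤ c → wd D (Q ∩ S) ≤ K * (b * X) * c⁻¹ ^ a := by
    intro hc1
    have hci : c⁻¹ ≤ 1 := ENNReal.inv_le_one.2 hc1
    have hZE : wd Z (Q ∩ S) ≤ b * J := by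
      rw [withDensity_apply _ hQSm]
      calc ∫⁻ x in Q ∩ S, Z x ≤ ∫⁻ x in Q ∩ S, b * W x ^ θ :=
            setLIntegral_mono' hQSm fun x hx => hx.2.le
        _ ≤ ∫⁻ x in Q, b * W x ^ θ := lintegral_mono_set inter_subset_left
        _ = b * ∫⁻ x in Q, W x ^ θ := lintegral_const_mul _ (hWm.pow_const _)
        _ ≤ _ := by gcongr; exact vv_jensen hWm hθ0 hθ1 Q
    have hb := hZ.bound y r hr (Q ∩ S) inter_subset_left hQSm
    have hVP0 : V ^ P ≠ 0 := by simp [ENNReal.rpow_eq_zero_iff, hV0, hVt]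
    have hVPt : V ^ P ≠ ⊤ := ENNReal.rpow_ne_top_of_nonneg (by linarith) hVt
    have h3 : (volume (Q ∩ S) / V) ^ P ≤ C2 * c⁻¹ := by
      rw [ENNReal.div_rpow_of_nonneg _ _ hP0.le]
      apply ENNReal.div_le_of_le_mul
      rw [← ENNReal.mul_le_mul_iff_right hZ0 hZt]
      refine hb.trans ?_
      have hcinv : c⁻¹ * wd Z Q = b * J := by
        rw [hc, ENNReal.inv_div (Or.inl hdt) (Or.inl hd0)]
        exact ENNReal.div_mul_cancel hZ0 hZt
      calc C2 * V ^ P * wd Z (Q ∩ S) ≤ C2 * V ^ P * (b * J) := by gcongr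
        _ = _ := by rw [← hcinv]; ring
    have h4 : volume (Q ∩ S) / V ≤ (C2 * c⁻¹) ^ (1 / P) := by
      calc volume (Q ∩ S) / V = ((volume (Q ∩ S) / V) ^ P) ^ (1 / P) := by
            rw [← ENNReal.rpow_mul, mul_one_div_cancel hP0.ne', ENNReal.rpow_one]
        _ ≤ _ := ENNReal.rpow_le_rpow h3 (by positivity)
    calc wd D (Q ∩ S) ≤ b * wd W (Q ∩ S) := hbasic _ inter_subset_right hQSm
      _ ≤ b * (K0 * (volume (Q ∩ S) / V) ^ δ * X) := by gcongr; exact hdec y r hr _ inter_subset_left hQSm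
      _ ≤ b * (K0 * ((C2 * c⁻¹) ^ (1 / P)) ^ δ * X) := by gcongr
      _ = (K0 * C2 ^ (δ / P)) * (b * X) * c⁻¹ ^ (δ / P) := by
          rw [← ENNReal.rpow_mul, show 1 / P * δ = δ / P by ring, ENNReal.mul_rpow_of_nonneg _ _ (by positivity)]; ring
      _ ≤ K * (b * X) * c⁻¹ ^ a := by
          gcongr ?_ * (b * X) * ?_
          · exact le_add_self
          · exact ENNReal.rpow_le_rpow_of_exponent_ge hci ha3
  constructor
  · rcases le_total c 1 with h | h
    · exact small h
    · refine htriv.trans ?_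
      calc b * X = 1 * (b * X) * 1 := by ring
        _ ≤ _ := by
          gcongr
          exact ENNReal.one_le_rpow h ha0
  · rcases le_total c 1 with h | h
    · refine htriv.trans ?_
      calc b * X = 1 * (b * X) * 1 := by ring
        _ ≤ _ := by
          gcongr
          exact ENNReal.one_le_rpow (ENNReal.one_le_inv.2 h) ha0
    · exact large h

/-- The summed estimate over dyadic scales. -/
theorem vv_dyadic {n : ℕ} (hn : 0 < n) {W Z : ESp n → ℝ≥0∞} {C1 C2 : ℝ≥0∞} {P : ℝ} (hW : A1p W C1)
    (hZ : APp Z P C2) {θ : ℝ} (hθ0 : 0 ≤ θ) (hθ1 : θ ≤ 1) (L : ℝ≥0∞) (hL : L ≠ ⊤) :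
    ∃ K : ℝ≥0∞, K ≠ ⊤ ∧ ∀ (y : ESp n) (b : ℤ → ℝ≥0∞), (∀ k, b k ≠ 0) → (∀ k, b k ≠ ⊤) → ∀ B : ℝ≥0∞,
      (∀ k, b k * wd W (Qc y (2 ^ k)) ≤ B) →
      (∀ k (j : ℕ), b (k + j) * ((wd W (Qc y (2 ^ (k + j)))) ^ θ * volume (Qc y (2 ^ (k + j))) ^ (1 - θ)) ≤
        L * (b k * ((wd W (Qc y (2 ^ k))) ^ θ * volume (Qc y (2 ^ k)) ^ (1 - θ)))) →
      wd (fun x => W x ^ (1 - θ) * Z x) (⋃ k : ℤ, Qc y (2 ^ k) ∩ {x | Z x < b k * W x ^ θ}) ≤ K * B := by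
  obtain ⟨a, ha, K, hK, hcube⟩ := vv_cube hW hZ hθ0 hθ1
  obtain ⟨γ, hγ, -, hrev⟩ := hZ.reverse hn
  refine ⟨2 * L ^ a * (1 - γ ^ a)⁻¹ * K, ?_, ?_⟩
  · refine ENNReal.mul_ne_top (ENNReal.mul_ne_top (ENNReal.mul_ne_top (by norm_num) (ENNReal.rpow_ne_top_of_nonneg ha.le hL)) ?_) hK
    rw [ENNReal.inv_ne_top, ← pos_iff_ne_zero, tsub_pos_iff_lt]
    exact ENNReal.rpow_lt_one hγ ha
  intro y b hb0 hbt B hB hd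
  have hp : ∀ k : ℤ, (0 : ℝ) < 2 ^ k := fun k => by positivity
  have hZ0 : ∀ k : ℤ, wd Z (Qc y (2 ^ k)) ≠ 0 := fun k => wd_pos hZ.meas hZ.pos (Qc_meas _ _) (Qc_vol_ne_zero y (hp k))
  have hZt : ∀ k : ℤ, wd Z (Qc y (2 ^ k)) ≠ ⊤ := fun k => hZ.fin y _ (hp k)
  set d : ℤ → ℝ≥0∞ := fun k => b k * ((wd W (Qc y (2 ^ k))) ^ θ * volume (Qc y (2 ^ k)) ^ (1 - θ)) with hdd
  have hd0 : ∀ k, d k ≠ 0 := by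
    intro k
    have h1 := Qc_vol_ne_zero y (hp k)
    have h2 := Qc_vol_ne_top y (hp k)
    have h3 := wd_pos hW.meas hW.pos (Qc_meas _ _) h1
    have h4 := hW.wd_fin y (hp k)
    refine mul_ne_zero (hb0 k) (mul_ne_zero ?_ ?_)
    · simp [ENNReal.rpow_eq_zero_iff, h3, h4]
    · simp [ENNReal.rpow_eq_zero_iff, h1, h2]
  have hdt : ∀ k, d k ≠ ⊤ := fun k => ENNReal.mul_ne_top (hbt k) (ENNReal.mul_ne_top (ENNReal.rpow_ne_top_of_nonneg hθ0 (hW.wd_fin y (hp k))) (ENNReal.rpow_ne_top_of_nonneg (by linarith) (Qc_vol_ne_top y (hp k))))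
  have hrev' : ∀ (k : ℤ) (j : ℕ), wd Z (Qc y (2 ^ k)) ≤ γ ^ j * wd Z (Qc y (2 ^ (k + j))) := by
    intro k j
    induction j with
    | zero => simp
    | succ j ih =>
      refine ih.trans ?_
      rw [pow_succ, mul_assoc]
      gcongr
      have := hrev y (2 ^ (k + j)) (hp _)
      rwa [show (2 : ℝ) * 2 ^ (k + (j : ℤ)) = 2 ^ (k + ((j + 1 : ℕ) : ℤ)) by
        rw [← zpow_one_add₀ (by norm_num)]; congr 1; push_cast; ring] at this
  have hsum := vv_sum (wd (fun x => W x ^ (1 - θ) * Z x)) (fun k : ℤ => Qc y (2 ^ k) ∩ {x | Z x < b k * W x ^ θ})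
    (fun k => wd Z (Qc y (2 ^ k)) / d k) (fun k => ENNReal.div_ne_zero.2 ⟨hZ0 k, hdt k⟩)
    (fun k => ENNReal.div_ne_top (hZt k) (hd0 k)) L γ hL hγ (by
      intro k j
      apply ENNReal.div_le_of_le_mul
      have h1 : wd Z (Qc y (2 ^ (k + j))) = wd Z (Qc y (2 ^ (k + j))) / d (k + j) * d (k + j) :=
        (ENNReal.div_mul_cancel (hd0 _) (hdt _)).symm
      calc wd Z (Qc y (2 ^ k)) ≤ γ ^ j * wd Z (Qc y (2 ^ (k + j))) := hrev' k j
        _ = γ ^ j * (wd Z (Qc y (2 ^ (k + j))) / d (k + j) * d (k + j)) := by rw [← h1]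
        _ ≤ γ ^ j * (wd Z (Qc y (2 ^ (k + j))) / d (k + j) * (L * d k)) := by gcongr; exact hd k j
        _ = _ := by ring) a ha (K * B)
    (fun k => ((hcube y _ (hp k) (b k) (hb0 k) (hbt k) _ rfl).1).trans (by gcongr; exact hB k))
    (fun k => ((hcube y _ (hp k) (b k) (hb0 k) (hbt k) _ rfl).2).trans (by gcongr; exact hB k))
  refine hsum.trans (le_of_eq (by ring))

theorem vv_pointwise {n m : ℕ} (α : ℝ) (u : Fin m → ESp n → ℝ) (v : ESp n → ℝ)
    (hum : ∀ i, Measurable (u i))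
    (K : Fin m → ESp n → ESp n → ℝ≥0∞) (hKm : ∀ i, Measurable (Function.uncurry (K i)))
    (C0 : ℝ≥0∞) (x : ESp n)
    (hker : ∀ᵐ y : Fin m → ESp n, ENNReal.ofReal ((∑ i, dist x (y i)) ^ ((m : ℝ) * (n : ℝ) - α))⁻¹ ≤
      C0 * ∏ i, (ENNReal.ofReal (u i (y i)) * K i x (y i)))
    (r : ℝ) (hr : 1 < r) (F : (i : Fin m) → ℕ → ESp n → ℝ) (hF : ∀ i k, Measurable (F i k)) :
    (∑' k : Fin m → ℕ, (ENNReal.ofReal |multiIα α (fun i => F i (k i)) x| / ENNReal.ofReal (v x)) ^ r) ^ (1 / r)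
      ≤ C0 / ENNReal.ofReal (v x) * ∏ i, ∫⁻ y, K i x y *
        ((∑' k : ℕ, ENNReal.ofReal (|F i k y| ^ r)) ^ (1 / r) * ENNReal.ofReal (u i y)) := by
  have hr0 : 0 < r := by linarith
  have hKx : ∀ i, Measurable (K i x) := fun i => (hKm i).comp measurable_prodMk_left
  set T : Fin m → ℕ → ℝ≥0∞ := fun i k => ∫⁻ y, ENNReal.ofReal |F i k y| * (ENNReal.ofReal (u i y) * K i x y) with hT
  have hTm : ∀ i k, Measurable (fun y => ENNReal.ofReal |F i k y| * (ENNReal.ofReal (u i y) * K i x y)) := by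
    intro i k
    have h1 := hF i k
    have h2 := hum i
    have h3 := hKx i
    exact (h1.norm.ennreal_ofReal).mul (h2.ennreal_ofReal.mul h3)
  have h1 : ∀ k : Fin m → ℕ, ENNReal.ofReal |multiIα α (fun i => F i (k i)) x| ≤ C0 * ∏ i, T i (k i) := by
    intro k
    rw [multiIα, ← Real.enorm_eq_ofReal_abs]
    refine (enorm_integral_le_lintegral_enorm _).trans ?_
    calc ∫⁻ y : Fin m → ESp n, ‖(∏ i, F i (k i) (y i)) / (∑ i, dist x (y i)) ^ ((m : ℝ) * (n : ℝ) - α)‖ₑ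
        ≤ ∫⁻ y : Fin m → ESp n, C0 * ∏ i, (ENNReal.ofReal |F i (k i) (y i)| * (ENNReal.ofReal (u i (y i)) * K i x (y i))) := by
          apply lintegral_mono_ae
          filter_upwards [hker] with y hy
          rw [Finset.prod_mul_distrib]
          have hR : 0 ≤ (∑ i, dist x (y i)) ^ ((m : ℝ) * (n : ℝ) - α) :=
            Real.rpow_nonneg (Finset.sum_nonneg fun i _ => dist_nonneg) _
          rw [Real.enorm_eq_ofReal_abs, div_eq_mul_inv, abs_mul, abs_of_nonneg (inv_nonneg.2 hR),
            ENNReal.ofReal_mul (abs_nonneg _), Finset.abs_prod, ENNReal.ofReal_prod_of_nonneg (fun i _ => abs_nonneg _)]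
          calc _ ≤ (∏ i, ENNReal.ofReal |F i (k i) (y i)|) * (C0 * ∏ i, (ENNReal.ofReal (u i (y i)) * K i x (y i))) := by gcongr
            _ = _ := by ring
      _ = C0 * ∏ i, T i (k i) := by
          rw [lintegral_const_mul, vv_lintegral_pi_prod
            (fun i y => ENNReal.ofReal |F i (k i) y| * (ENNReal.ofReal (u i y) * K i x y)) (fun i => hTm i (k i))]
          · refine Finset.measurable_prod _ fun i _ => ?_
            exact (hTm i (k i)).comp (measurable_pi_apply i)
  have h2 : ∀ k : Fin m → ℕ, (ENNReal.ofReal |multiIα α (fun i => F i (k i)) x| / ENNReal.ofReal (v x)) ^ r ≤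
      (C0 / ENNReal.ofReal (v x)) ^ r * ∏ i, T i (k i) ^ r := by
    intro k
    rw [ENNReal.prod_rpow_of_nonneg hr0.le, ← ENNReal.mul_rpow_of_nonneg _ _ hr0.le]
    apply ENNReal.rpow_le_rpow _ hr0.le
    rw [ENNReal.div_eq_inv_mul, ENNReal.div_eq_inv_mul, mul_assoc]
    gcongr
    exact h1 k
  calc _ ≤ (∑' k : Fin m → ℕ, (C0 / ENNReal.ofReal (v x)) ^ r * ∏ i, T i (k i) ^ r) ^ (1 / r) := by
        apply ENNReal.rpow_le_rpow _ (by positivity)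
        exact ENNReal.tsum_le_tsum h2
    _ = C0 / ENNReal.ofReal (v x) * ∏ i, (∑' k, T i k ^ r) ^ (1 / r) := by
        rw [ENNReal.tsum_mul_left, vv_tsum_pi_prod (fun i k => T i k ^ r), ENNReal.mul_rpow_of_nonneg _ _ (by positivity),
          ← ENNReal.rpow_mul, mul_one_div_cancel hr0.ne', ENNReal.rpow_one, ENNReal.prod_rpow_of_nonneg (by positivity)]
    _ ≤ _ := by
        gcongr with i _
        refine (vv_minkowski hr _ (hTm i)).trans (le_of_eq ?_)
        refine lintegral_congr fun y => ?_
        have : ∀ k, (ENNReal.ofReal |F i k y| * (ENNReal.ofReal (u i y) * K i x y)) ^ r =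
            (ENNReal.ofReal (u i y) * K i x y) ^ r * ENNReal.ofReal (|F i k y| ^ r) := by
          intro k
          rw [ENNReal.mul_rpow_of_nonneg _ _ hr0.le, ENNReal.ofReal_rpow_of_nonneg (abs_nonneg _) hr0.le, mul_comm]
        simp only [this]
        rw [ENNReal.tsum_mul_left, ENNReal.mul_rpow_of_nonneg _ _ (by positivity),
          ← ENNReal.rpow_mul, mul_one_div_cancel hr0.ne', ENNReal.rpow_one]
        ring

theorem vv_main {n m : ℕ} (hm : 0 < m) (α q : ℝ) (hq : 0 < q) (hp : 1 < (m : ℝ) * q)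
    (u : Fin m → ESp n → ℝ) (v : ESp n → ℝ) (hum : ∀ i, Measurable (u i)) (hvm : Measurable v)
    (hvpos : ∀ᵐ x ∂(volume : Measure (ESp n)), 0 < v x)
    (K : Fin m → ESp n → ESp n → ℝ≥0∞) (hKm : ∀ i, Measurable (Function.uncurry (K i)))
    (vi : Fin m → ESp n → ℝ≥0∞) (hvim : ∀ i, Measurable (vi i))
    (hvi : ∀ i, ∀ᵐ x ∂(volume : Measure (ESp n)), vi i x ≠ 0 ∧ vi i x ≠ ⊤)
    (hviv : ∀ᵐ x ∂(volume : Measure (ESp n)), ∏ i, vi i x = ENNReal.ofReal (v x))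
    (A : Fin m → ℝ≥0∞) (hA : ∀ i, A i ≠ ⊤)
    (htest : ∀ i, ∀ᵐ y ∂(volume : Measure (ESp n)), ∀ s : ℝ≥0∞, s ≠ 0 → s ≠ ⊤ →
      wd (fun x => ENNReal.ofReal ((∏ i, u i x ^ q) * v x ^ q)) {x | s * vi i x < K i x y} ≤ A i * s ^ (-((m : ℝ) * q)))
    (C0 : ℝ≥0∞) (hC00 : C0 ≠ 0) (hC0 : C0 ≠ ⊤)
    (hker : ∀ x, ∀ᵐ y : Fin m → ESp n, ENNReal.ofReal ((∑ i, dist x (y i)) ^ ((m : ℝ) * (n : ℝ) - α))⁻¹ ≤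
      C0 * ∏ i, (ENNReal.ofReal (u i (y i)) * K i x (y i)))
    (r : ℝ) (hr : 1 < r) (F : (i : Fin m) → ℕ → ESp n → ℝ) (hF : ∀ i k, Measurable (F i k)) :
    ∃ C : ℝ≥0∞, 0 < C ∧ C < ⊤ ∧
      wnorm (fun x => (∑' k : Fin m → ℕ,
            (ENNReal.ofReal |multiIα α (fun i => F i (k i)) x| /
              ENNReal.ofReal (v x)) ^ r) ^ (1 / r)) q
          (fun x => (∏ i, u i x ^ q) * v x ^ q)
        ≤ C * ∏ i, ∫⁻ x,
            (∑' k : ℕ, ENNReal.ofReal (|F i k x| ^ r)) ^ (1 / r) *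
              ENNReal.ofReal (u i x) := by
  have hm' : (0 : ℝ) < m := by exact_mod_cast hm
  set Dn : ESp n → ℝ := fun x => (∏ i, u i x ^ q) * v x ^ q with hDn
  have hDnm : Measurable Dn := (Finset.measurable_prod _ fun i _ => (hum i).pow_const _).mul (hvm.pow_const _)
  have hsf : SigmaFinite (wd (fun x => ENNReal.ofReal (Dn x))) := SigmaFinite.withDensity_ofReal _
  have hac : wd (fun x => ENNReal.ofReal (Dn x)) ≪ volume := withDensity_absolutelyContinuous _ _
  have hw : ∀ i, ∃ A' : ℝ≥0∞, A' ≠ ⊤ ∧ ∀ G : ESp n → ℝ≥0∞, Measurable G → (∫⁻ y, G y) ≠ 0 → (∫⁻ y, G y) ≠ ⊤ →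
      ∀ τ : ℝ≥0∞, τ ≠ 0 → τ ≠ ⊤ →
      wd (fun x => ENNReal.ofReal (Dn x)) {x | τ * (∫⁻ y, G y) * vi i x < ∫⁻ y, K i x y * G y} ≤ A' * τ ^ (-((m : ℝ) * q)) := by
    intro i
    exact vv_weak_type hp (A i) (hA i) (K i) (hKm i) (vi i) (hvim i) (hac.ae_le (hvi i)) (htest i)
  choose A' hA't hA' using hw
  set G : Fin m → ESp n → ℝ≥0∞ := fun i x => (∑' k : ℕ, ENNReal.ofReal (|F i k x| ^ r)) ^ (1 / r) * ENNReal.ofReal (u i x) with hG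
  have hGm : ∀ i, Measurable (G i) := by
    intro i
    refine (Measurable.pow_const (Measurable.ennreal_tsum fun k => ?_) _).mul (hum i).ennreal_ofReal
    exact ((hF i k).norm.pow_const r).ennreal_ofReal
  set g : ESp n → ℝ≥0∞ := fun x => (∑' k : Fin m → ℕ,
            (ENNReal.ofReal |multiIα α (fun i => F i (k i)) x| /
              ENNReal.ofReal (v x)) ^ r) ^ (1 / r) with hg
  have hgle : ∀ x, g x ≤ C0 / ENNReal.ofReal (v x) * ∏ i, ∫⁻ y, K i x y * G i y := fun x =>
    vv_pointwise α u v hum K hKm C0 x (hker x) r hr F hF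
  set S : ℝ≥0∞ := ∑ i, A' i with hS
  have hSt : S ≠ ⊤ := ENNReal.sum_ne_top.2 fun i _ => hA't i
  refine ⟨S ^ (1 / q) * C0 + 1, by simp, ?_, ?_⟩
  · exact ENNReal.add_lt_top.2 ⟨ENNReal.mul_lt_top (ENNReal.rpow_lt_top_of_nonneg (by positivity) hSt) hC0.lt_top, by norm_num⟩
  change wnorm g q Dn ≤ _ * ∏ i, ∫⁻ x, G i x
  set N : Fin m → ℝ≥0∞ := fun i => ∫⁻ x, G i x with hN
  change wnorm g q Dn ≤ _ * ∏ i, N i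
  by_cases h0 : ∃ i, N i = 0
  · obtain ⟨i, hi⟩ := h0
    have hGi : G i =ᵐ[volume] 0 := (lintegral_eq_zero_iff (hGm i)).1 hi
    have hg0 : ∀ x, g x = 0 := by
      intro x
      have : ∫⁻ y, K i x y * G i y = 0 := by
        rw [← lintegral_zero (μ := (volume : Measure (ESp n)))]
        apply lintegral_congr_ae
        filter_upwards [hGi] with y hy
        rw [hy]; simp
      have h3 := hgle x
      rw [Finset.prod_eq_zero (Finset.mem_univ i) this, mul_zero] at h3
      exact le_antisymm h3 zero_le
    refine (le_of_eq ?_).trans zero_le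
    simp only [wnorm, hg0, not_lt_zero, Set.setOf_false, wMeas]
    have : 0 < q⁻¹ := by positivity
    simp [ENNReal.zero_rpow_of_pos, this]
  push Not at h0
  by_cases ht : ∃ i, N i = ⊤
  · obtain ⟨i, hi⟩ := ht
    have : ∏ i, N i = ⊤ := by
      rw [← Finset.mul_prod_erase _ _ (Finset.mem_univ i), hi, ENNReal.top_mul]
      exact Finset.prod_ne_zero_iff.2 fun j _ => h0 j
    rw [this, ENNReal.mul_top (by simp)]
    exact le_top
  push Not at ht
  have hP0 : ∏ i, N i ≠ 0 := Finset.prod_ne_zero_iff.2 fun j _ => h0 j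
  have hPt : ∏ i, N i ≠ ⊤ := ENNReal.prod_ne_top fun j _ => ht j
  set Pn := ∏ i, N i with hPn
  refine iSup₂_le fun t ht0 => ?_
  set t' := ENNReal.ofReal t with ht'
  have ht'0 : t' ≠ 0 := by simpa [ht'] using ht0
  have ht't : t' ≠ ⊤ := ENNReal.ofReal_ne_top
  have hCN0 : C0 * Pn ≠ 0 := mul_ne_zero hC00 hP0
  have hCNt : C0 * Pn ≠ ⊤ := ENNReal.mul_ne_top hC0 hPt
  set ρ := t' / (C0 * Pn) with hρ
  have hρ0 : ρ ≠ 0 := ENNReal.div_ne_zero.2 ⟨ht'0, hCNt⟩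
  have hρt : ρ ≠ ⊤ := ENNReal.div_ne_top ht't hCN0
  have hρe : C0 * (ρ * Pn) = t' := by
    rw [hρ, show C0 * (t' / (C0 * Pn) * Pn) = t' / (C0 * Pn) * (C0 * Pn) by ring]
    exact ENNReal.div_mul_cancel hCN0 hCNt
  set τ := ρ ^ ((m : ℝ)⁻¹) with hτ
  have hτ0 : τ ≠ 0 := by simp [hτ, ENNReal.rpow_eq_zero_iff, hρ0, hρt]
  have hτt : τ ≠ ⊤ := ENNReal.rpow_ne_top_of_nonneg (by positivity) hρt
  have hτm : τ ^ m = ρ := by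
    rw [hτ, ← ENNReal.rpow_natCast, ← ENNReal.rpow_mul, inv_mul_cancel₀ hm'.ne', ENNReal.rpow_one]
  have hmeas : wMeas Dn {x | t' < g x} ≤ S * τ ^ (-((m : ℝ) * q)) := by
    have e1 : wMeas Dn {x | t' < g x} = wd (fun x => ENNReal.ofReal (Dn x)) {x | t' < g x} := by
      rw [withDensity_apply']; rfl
    rw [e1]
    calc wd (fun x => ENNReal.ofReal (Dn x)) {x | t' < g x}
        ≤ wd (fun x => ENNReal.ofReal (Dn x)) (⋃ i, {x | τ * (∫⁻ y, G i y) * vi i x < ∫⁻ y, K i x y * G i y}) := by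
          apply measure_mono_ae
          have h5 : ∀ᵐ x ∂(volume : Measure (ESp n)), x ∈ {x | t' < g x} → x ∈ ⋃ i, {x | τ * (∫⁻ y, G i y) * vi i x < ∫⁻ y, K i x y * G i y} := by
            filter_upwards [hvpos, hviv] with x hx1 hx2 hx3
            by_contra hcon
            simp only [mem_iUnion, mem_setOf_eq, not_exists, not_lt] at hcon
            have hv0 : ENNReal.ofReal (v x) ≠ 0 := by simpa using hx1
            have h6 : g x ≤ t' := by
              refine (hgle x).trans ?_
              calc _ ≤ C0 / ENNReal.ofReal (v x) * ∏ i, (τ * N i * vi i x) := by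
                    gcongr with i _
                    exact hcon i
                _ = C0 * (ρ * Pn) * (ENNReal.ofReal (v x) / ENNReal.ofReal (v x)) := by
                    rw [Finset.prod_mul_distrib, Finset.prod_mul_distrib, hx2, Finset.prod_const, Finset.card_univ, Fintype.card_fin, hτm,
                      ENNReal.div_eq_inv_mul, ENNReal.div_eq_inv_mul]
                    ring
                _ = t' := by rw [hρe, ENNReal.div_self hv0 ENNReal.ofReal_ne_top, mul_one]
            exact absurd hx3 (not_lt.2 h6)
          exact hac.ae_le h5
      _ ≤ ∑ i, wd (fun x => ENNReal.ofReal (Dn x)) {x | τ * (∫⁻ y, G i y) * vi i x < ∫⁻ y, K i x y * G i y} :=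
          measure_iUnion_fintype_le _ _
      _ ≤ ∑ i, A' i * τ ^ (-((m : ℝ) * q)) := Finset.sum_le_sum fun i _ => hA' i (G i) (hGm i) (h0 i) (ht i) τ hτ0 hτt
      _ = _ := by rw [hS, Finset.sum_mul]
  calc t' * wMeas Dn {x | t' < g x} ^ (1 / q) ≤ t' * (S * τ ^ (-((m : ℝ) * q))) ^ (1 / q) := by gcongr
    _ = S ^ (1 / q) * (t' * ρ⁻¹) := by
        rw [ENNReal.mul_rpow_of_nonneg _ _ (by positivity), ← ENNReal.rpow_mul,
          show -((m : ℝ) * q) * (1 / q) = -(m : ℝ) by field_simp, ENNReal.rpow_neg, ENNReal.rpow_natCast, hτm]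
        ring
    _ = S ^ (1 / q) * C0 * Pn := by
        rw [← hρe, show C0 * (ρ * Pn) * ρ⁻¹ = C0 * Pn * (ρ * ρ⁻¹) by ring, ENNReal.mul_inv_cancel hρ0 hρt]; ring
    _ ≤ _ := by gcongr; exact le_self_add

theorem vv_ae_ne {n : ℕ} (hn : 0 < n) (y : ESp n) : ∀ᵐ x ∂(volume : Measure (ESp n)), x ≠ y := by
  have : Nonempty (Fin n) := ⟨⟨0, hn⟩⟩
  have : volume ({y} : Set (ESp n)) = 0 := measure_singleton y
  rw [ae_iff]
  simpa using this

theorem vv_test {n : ℕ} (hn : 0 < n) {W Z : ESp n → ℝ≥0∞} {C1 C2 : ℝ≥0∞} {P : ℝ} (hW : A1p W C1)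
    (hZ : APp Z P C2) {θ : ℝ} (hθ0 : 0 ≤ θ) (hθ1 : θ ≤ 1) (L : ℝ≥0∞) (hL : L ≠ ⊤) {p : ℝ} (hp : 0 < p) :
    ∃ K : ℝ≥0∞, K ≠ ⊤ ∧ ∀ (y : ESp n) (g : ℤ → ℝ≥0∞), (∀ k, g k ≠ 0) → (∀ k, g k ≠ ⊤) → ∀ M : ℝ≥0∞,
      (∀ k, g k * wd W (Qc y (2 ^ k)) ≤ M) →
      (∀ k (j : ℕ), g (k + j) * ((wd W (Qc y (2 ^ (k + j)))) ^ θ * volume (Qc y (2 ^ (k + j))) ^ (1 - θ)) ≤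
        L * (g k * ((wd W (Qc y (2 ^ k))) ^ θ * volume (Qc y (2 ^ k)) ^ (1 - θ)))) →
      ∀ κ : ESp n → ℝ≥0∞, (∀ k x, 2 ^ (k - 1) ≤ dist x y → dist x y < 2 ^ k → κ x ^ p ≤ g k) →
      ∀ s : ℝ≥0∞, s ≠ 0 → s ≠ ⊤ →
      wd (fun x => W x ^ (1 - θ) * Z x) {x | s * (Z x * W x ^ (-θ)) ^ (1 / p) < κ x} ≤ K * M * s ^ (-p) := by
  obtain ⟨K, hK, hdy⟩ := vv_dyadic hn hW hZ hθ0 hθ1 L hL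
  refine ⟨K, hK, ?_⟩
  intro y g hg0 hgt M hM hL' κ hκ s hs0 hst
  have hsp0 : s ^ (-p) ≠ 0 := by simp [ENNReal.rpow_eq_zero_iff, hs0, hst]
  have hspt : s ^ (-p) ≠ ⊤ := by simp [ENNReal.rpow_eq_top_iff, hs0, hst]
  have h1 := hdy y (fun k => s ^ (-p) * g k) (fun k => mul_ne_zero hsp0 (hg0 k)) (fun k => ENNReal.mul_ne_top hspt (hgt k))
    (M * s ^ (-p)) (fun k => by
      calc s ^ (-p) * g k * wd W (Qc y (2 ^ k)) = g k * wd W (Qc y (2 ^ k)) * s ^ (-p) := by ring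
        _ ≤ _ := mul_le_mul_left (hM k) _)
    (fun k j => by
      have h2 := mul_le_mul_right (hL' k j) (s ^ (-p))
      refine (le_of_eq ?_).trans (h2.trans (le_of_eq ?_)) <;> ring)
  rw [mul_assoc]
  refine le_trans ?_ h1
  apply measure_mono_ae
  have h5 : ∀ᵐ x ∂(volume : Measure (ESp n)), x ∈ {x | s * (Z x * W x ^ (-θ)) ^ (1 / p) < κ x} →
      x ∈ ⋃ k : ℤ, Qc y (2 ^ k) ∩ {x | Z x < s ^ (-p) * g k * W x ^ θ} := by
    filter_upwards [vv_ae_ne hn y, hW.pos] with x hxy hWx hx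
    have hWxt := hW.fin x
    obtain ⟨k, hk1, hk2⟩ := exists_mem_Ico_zpow (dist_pos.2 hxy) (one_lt_two (α := ℝ))
    refine mem_iUnion.2 ⟨k + 1, mem_Qc_of_dist hk2.le, ?_⟩
    by_contra hcon
    simp only [mem_setOf_eq, not_lt] at hcon hx
    apply absurd hx
    rw [not_lt]
    have h6 := hκ (k + 1) x (by simpa using hk1) hk2
    have h7 : s ^ p * s ^ (-p) = 1 := by rw [← ENNReal.rpow_add _ _ hs0 hst]; simp
    have h8 : W x ^ θ * W x ^ (-θ) = 1 := by rw [← ENNReal.rpow_add _ _ hWx hWxt]; simp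
    have h9 : κ x ^ p ≤ (s * (Z x * W x ^ (-θ)) ^ (1 / p)) ^ p := by
      rw [ENNReal.mul_rpow_of_nonneg _ _ hp.le, ← ENNReal.rpow_mul, one_div_mul_cancel hp.ne', ENNReal.rpow_one]
      calc κ x ^ p ≤ g (k + 1) := h6
        _ = (s ^ p * s ^ (-p)) * g (k + 1) * (W x ^ θ * W x ^ (-θ)) := by rw [h7, h8]; simp
        _ = s ^ p * ((s ^ (-p) * g (k + 1) * W x ^ θ) * W x ^ (-θ)) := by ring
        _ ≤ _ := by gcongr
    exact (ENNReal.rpow_le_rpow_iff hp).1 h9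
  exact (withDensity_absolutelyContinuous volume _).ae_le h5

theorem vv_ae_pi {n m : ℕ} {p : Fin m → ESp n → Prop} (h : ∀ i, ∀ᵐ y ∂(volume : Measure (ESp n)), p i y) :
    ∀ᵐ y : Fin m → ESp n, ∀ i, p i (y i) := by
  rw [ae_all_iff]
  intro i
  exact (Measure.quasiMeasurePreserving_eval (fun _ : Fin m => (volume : Measure (ESp n))) i).ae (h i)

/-- An `A₁` weight controls its averages at almost every centre. -/
theorem A1p.center {n : ℕ} {W : ESp n → ℝ≥0∞} {C : ℝ≥0∞} (h : A1p W C) :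
    ∀ᵐ y ∂(volume : Measure (ESp n)), ∀ k : ℤ, wd W (Qc y (2 ^ k)) ≤ 2 ^ n * C * volume (Qc y (2 ^ k)) * W y := by
  have hd := TopologicalSpace.exists_countable_dense (ESp n)
  obtain ⟨D, hDc, hDd⟩ := hd
  have h1 : ∀ᵐ y ∂(volume : Measure (ESp n)), ∀ d ∈ D, ∀ k : ℤ, y ∈ Qc d (2 * 2 ^ k) →
      wd W (Qc d (2 * 2 ^ k)) ≤ C * volume (Qc d (2 * 2 ^ k)) * W y := by
    rw [ae_ball_iff hDc]
    intro d _
    rw [ae_all_iff]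
    intro k
    exact h.bound d _ (by positivity)
  filter_upwards [h1] with y hy k
  have hk : (0 : ℝ) < 2 ^ k := by positivity
  obtain ⟨d, hdD, hdy⟩ := hDd.exists_dist_lt y hk
  have hyd : y ∈ Qc d (2 ^ k) := mem_Qc_of_dist hdy.le
  have h2 := hy d hdD k (Qc_mono d (by linarith) hyd)
  calc wd W (Qc y (2 ^ k)) ≤ wd W (Qc d (2 * 2 ^ k)) := measure_mono (Qc_subset hyd (by linarith))
    _ ≤ _ := h2
    _ = _ := by
      rw [Qc_vol_scale d y hk.le (by norm_num)]; simp; ring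

theorem vv_test_two {n : ℕ} (hn : 0 < n) {W Z : ESp n → ℝ≥0∞} {C1 C2 : ℝ≥0∞} {P : ℝ} (hW : A1p W C1)
    (hZ : APp Z P C2) {θ : ℝ} (hθ0 : 0 ≤ θ) (hθ1 : θ ≤ 1) {p : ℝ} (hp : 0 < p) :
    ∃ A : ℝ≥0∞, A ≠ ⊤ ∧ ∀ᵐ y ∂(volume : Measure (ESp n)), ∀ s : ℝ≥0∞, s ≠ 0 → s ≠ ⊤ →
      wd (fun x => W x ^ (1 - θ) * Z x) {x | s * (Z x * W x ^ (-θ)) ^ (1 / p) <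
        ENNReal.ofReal (dist x y) ^ (-((n : ℝ) / p)) * W y ^ (-(1 / p))} ≤ A * s ^ (-p) := by
  obtain ⟨K, hK, hdy⟩ := vv_test hn hW hZ hθ0 hθ1 (C1 ^ θ) (ENNReal.rpow_ne_top_of_nonneg hθ0 hW.hC) hp
  refine ⟨K * (4 ^ n * (2 ^ n * C1)), ?_, ?_⟩
  · have := hW.hC
    finiteness
  filter_upwards [hW.pos, hW.center] with y hy0 hyc
  have hyt := hW.fin y
  have hk0 : ∀ k : ℤ, (0 : ℝ) < 2 ^ k := fun k => by positivity
  have hV0 : ∀ k : ℤ, volume (Qc y (2 ^ k)) ≠ 0 := fun k => Qc_vol_ne_zero y (hk0 k)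
  have hVt : ∀ k : ℤ, volume (Qc y (2 ^ k)) ≠ ⊤ := fun k => Qc_vol_ne_top y (hk0 k)
  apply hdy y (fun k => (W y)⁻¹ * (4 ^ n * (volume (Qc y (2 ^ k)))⁻¹))
  · intro k
    simp [hyt, hVt k]
  · intro k
    have := ENNReal.inv_ne_top.2 (hV0 k)
    have := ENNReal.inv_ne_top.2 hy0
    finiteness
  · intro k
    calc (W y)⁻¹ * (4 ^ n * (volume (Qc y (2 ^ k)))⁻¹) * wd W (Qc y (2 ^ k))
        ≤ (W y)⁻¹ * (4 ^ n * (volume (Qc y (2 ^ k)))⁻¹) * (2 ^ n * C1 * volume (Qc y (2 ^ k)) * W y) :=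
          mul_le_mul_right (hyc k) _
      _ = ((W y)⁻¹ * W y) * ((volume (Qc y (2 ^ k)))⁻¹ * volume (Qc y (2 ^ k))) * (4 ^ n * (2 ^ n * C1)) := by ring
      _ = _ := by rw [ENNReal.inv_mul_cancel hy0 hyt, ENNReal.inv_mul_cancel (hV0 k) (hVt k)]; simp
  · intro k j
    have hle : (2 : ℝ) ^ k ≤ 2 ^ (k + j) := zpow_le_zpow_right₀ one_le_two (by omega)
    have hs := hW.sub y (hk0 (k + j)) (Qc_mono y hle) (Qc_meas y _)
    have h1 : ∀ k : ℤ, (volume (Qc y (2 ^ k)))⁻¹ * volume (Qc y (2 ^ k)) ^ (1 - θ) = volume (Qc y (2 ^ k)) ^ (-θ) := by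
      intro k
      rw [← ENNReal.rpow_neg_one, ← ENNReal.rpow_add _ _ (hV0 k) (hVt k)]
      congr 1; ring
    have h2 : ∀ k : ℤ, volume (Qc y (2 ^ k)) ^ θ * volume (Qc y (2 ^ k)) ^ (-θ) = 1 := by
      intro k
      rw [← ENNReal.rpow_add _ _ (hV0 k) (hVt k)]
      simp
    have h3 := ENNReal.rpow_le_rpow hs hθ0
    rw [ENNReal.mul_rpow_of_nonneg _ _ hθ0, ENNReal.mul_rpow_of_nonneg _ _ hθ0, ENNReal.mul_rpow_of_nonneg _ _ hθ0] at h3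
    have h4 := h1 k
    have h5 := h1 (k + j)
    have h6 := h2 k
    have h7 := h2 (k + j)
    generalize volume (Qc y (2 ^ k)) = Vk at *
    generalize volume (Qc y (2 ^ (k + (j : ℤ)))) = Vj at *
    generalize wd W (Qc y (2 ^ k)) = Xk at *
    generalize wd W (Qc y (2 ^ (k + (j : ℤ)))) = Xj at *
    calc (W y)⁻¹ * (4 ^ n * Vj⁻¹) * (Xj ^ θ * Vj ^ (1 - θ))
        = (W y)⁻¹ * 4 ^ n * (Vj⁻¹ * Vj ^ (1 - θ)) * Xj ^ θ * 1 := by ring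
      _ = (W y)⁻¹ * 4 ^ n * Vj ^ (-θ) * Xj ^ θ * (Vk ^ θ * Vk ^ (-θ)) := by rw [h5, h6]
      _ = (W y)⁻¹ * 4 ^ n * Vj ^ (-θ) * Vk ^ (-θ) * (Xj ^ θ * Vk ^ θ) := by ring
      _ ≤ (W y)⁻¹ * 4 ^ n * Vj ^ (-θ) * Vk ^ (-θ) * (C1 ^ θ * Vj ^ θ * Xk ^ θ) := mul_le_mul_right h3 _
      _ = (W y)⁻¹ * 4 ^ n * (Vj ^ θ * Vj ^ (-θ)) * Vk ^ (-θ) * (C1 ^ θ * Xk ^ θ) := by ring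
      _ = (W y)⁻¹ * 4 ^ n * (Vk⁻¹ * Vk ^ (1 - θ)) * (C1 ^ θ * Xk ^ θ) := by rw [h7, h4, mul_one]
      _ = _ := by ring
  · intro k x hx1 hx2
    have hd : 0 < dist x y := lt_of_lt_of_le (hk0 _) hx1
    rw [ENNReal.mul_rpow_of_nonneg _ _ hp.le, ← ENNReal.rpow_mul, ← ENNReal.rpow_mul]
    have e1 : -((n : ℝ) / p) * p = -n := by field_simp
    have e2 : -(1 / p) * p = -1 := by field_simp
    rw [e1, e2, ENNReal.rpow_neg_one, mul_comm]
    apply mul_le_mul_right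
    rw [ENNReal.rpow_neg, ENNReal.rpow_natCast, Qc_vol y (hk0 k).le]
    have h1 : ENNReal.ofReal (2 * 2 ^ k) ≤ 4 * ENNReal.ofReal (dist x y) := by
      rw [show (4 : ℝ≥0∞) = ENNReal.ofReal 4 by simp, ← ENNReal.ofReal_mul (by norm_num)]
      apply ENNReal.ofReal_le_ofReal
      have : (2 : ℝ) ^ k = 2 ^ (k - 1) * 2 := by rw [← zpow_add_one₀ (by norm_num)]; simp
      rw [this]; linarith
    have h2 : ENNReal.ofReal (2 * 2 ^ k) ^ n ≤ 4 ^ n * ENNReal.ofReal (dist x y) ^ n := by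
      rw [← mul_pow]; gcongr
    have h3 := ENNReal.inv_le_inv.2 h2
    rw [ENNReal.mul_inv (by left; positivity) (by left; finiteness)] at h3
    calc _ = 4 ^ n * ((4 ^ n)⁻¹ * (ENNReal.ofReal (dist x y) ^ n)⁻¹) := by
            rw [← mul_assoc, ENNReal.mul_inv_cancel (by positivity) (by finiteness), one_mul]
      _ ≤ _ := mul_le_mul_right h3 _

theorem vv_test_one {n : ℕ} (hn : 0 < n) {W Z : ESp n → ℝ≥0∞} {C1 C2 : ℝ≥0∞} {P : ℝ} (hW : A1p W C1)
    (hZ : APp Z P C2) {p : ℝ} (hp : 0 < p) :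
    ∃ A : ℝ≥0∞, A ≠ ⊤ ∧ ∀ y : ESp n, ∀ s : ℝ≥0∞, s ≠ 0 → s ≠ ⊤ →
      wd Z {x | s * (Z x * W x ^ (-1 : ℝ)) ^ (1 / p) < wd W (Qc y (dist x y)) ^ (-(1 / p))} ≤ A * s ^ (-p) := by
  have hMt : C1 * ENNReal.ofReal 2 ^ n * 2 ≠ ⊤ := by
    have := hW.hC
    finiteness
  obtain ⟨K, hK, hdy⟩ := vv_test hn hW hZ zero_le_one le_rfl (C1 * ENNReal.ofReal 2 ^ n * 2) hMt hp
  refine ⟨K * (C1 * ENNReal.ofReal 2 ^ n * 2), by finiteness, ?_⟩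
  intro y s hs0 hst
  have hk0 : ∀ k : ℤ, (0 : ℝ) < 2 ^ k := fun k => by positivity
  have hX0 : ∀ k : ℤ, wd W (Qc y (2 ^ k)) ≠ 0 := fun k => wd_pos hW.meas hW.pos (Qc_meas _ _) (Qc_vol_ne_zero y (hk0 k))
  have hXt : ∀ k : ℤ, wd W (Qc y (2 ^ k)) ≠ ⊤ := fun k => hW.wd_fin y (hk0 k)
  have hz : ∀ k : ℤ, (2 : ℝ) ^ k = 2 * 2 ^ (k - 1) := fun k => by
    rw [mul_comm, ← zpow_add_one₀ (by norm_num)]; simp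
  have hdb : ∀ k : ℤ, wd W (Qc y (2 ^ k)) ≤ C1 * ENNReal.ofReal 2 ^ n * 2 * wd W (Qc y (2 ^ (k - 1))) := by
    intro k
    have := hW.doubling y (hk0 (k - 1)) one_le_two (subset_refl (Qc y (2 ^ (k - 1)))) (Qc_meas _ _)
      (by rw [two_mul]; exact le_self_add)
    rwa [← hz] at this
  have hg : ∀ k : ℤ, (wd W (Qc y (2 ^ (k - 1))))⁻¹ * wd W (Qc y (2 ^ k)) ≤ C1 * ENNReal.ofReal 2 ^ n * 2 := by
    intro k
    calc _ ≤ (wd W (Qc y (2 ^ (k - 1))))⁻¹ * (C1 * ENNReal.ofReal 2 ^ n * 2 * wd W (Qc y (2 ^ (k - 1)))) :=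
          mul_le_mul_right (hdb k) _
      _ = (wd W (Qc y (2 ^ (k - 1))))⁻¹ * wd W (Qc y (2 ^ (k - 1))) * (C1 * ENNReal.ofReal 2 ^ n * 2) := by ring
      _ = _ := by rw [ENNReal.inv_mul_cancel (hX0 _) (hXt _), one_mul]
  have h := hdy y (fun k => (wd W (Qc y (2 ^ (k - 1))))⁻¹) (fun k => ENNReal.inv_ne_zero.2 (hXt _))
    (fun k => ENNReal.inv_ne_top.2 (hX0 _)) _ hg (fun k j => by
      simp only [sub_self, ENNReal.rpow_zero, mul_one, ENNReal.rpow_one]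
      refine (hg (k + j)).trans ?_
      nth_rw 1 [← mul_one (C1 * ENNReal.ofReal 2 ^ n * 2)]
      apply mul_le_mul_right
      rw [← ENNReal.inv_mul_cancel (hX0 (k - 1)) (hXt (k - 1))]
      apply mul_le_mul_right
      apply measure_mono
      exact Qc_mono y (zpow_le_zpow_right₀ one_le_two (by omega)))
    (fun x => wd W (Qc y (dist x y)) ^ (-(1 / p))) (fun k x h1 h2 => by
      have e2 : -(1 / p) * p = -1 := by field_simp
      rw [← ENNReal.rpow_mul, e2, ENNReal.rpow_neg_one]
      apply ENNReal.inv_le_inv.2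
      apply measure_mono
      exact Qc_mono y h1) s hs0 hst
  simpa using h

theorem vv_rpow_ne {a : ℝ≥0∞} (h0 : a ≠ 0) (ht : a ≠ ⊤) (s : ℝ) : a ^ s ≠ 0 ∧ a ^ s ≠ ⊤ := by
  constructor
  · simp [ENNReal.rpow_eq_zero_iff, h0, ht]
  · simp [ENNReal.rpow_eq_top_iff, h0, ht]

theorem vv_pow_root {a q : ℝ} (ha : 0 ≤ a) {m : ℕ} (hm : 0 < m) :
    ENNReal.ofReal (a ^ ((m : ℝ) * q)) ^ ((m : ℝ)⁻¹) = ENNReal.ofReal (a ^ q) := by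
  have hm' : (0 : ℝ) < m := by exact_mod_cast hm
  rw [ENNReal.ofReal_rpow_of_nonneg (by positivity) (by positivity), ← Real.rpow_mul ha]
  congr 2; field_simp

theorem vv_pow_cancel {a p : ℝ} (ha : 0 < a) (hp : 0 < p) :
    ENNReal.ofReal a * ENNReal.ofReal (a ^ p) ^ (-(1 / p)) = 1 := by
  rw [ENNReal.ofReal_rpow_of_pos (by positivity), ← Real.rpow_mul ha.le]
  have e : p * -(1 / p) = -1 := by field_simp
  rw [e, Real.rpow_neg_one, ← ENNReal.ofReal_mul ha.le, mul_inv_cancel₀ ha.ne']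
  simp

theorem vv_case_two {n m : ℕ} (hn : 0 < n) (hm : 0 < m)
    (α q : ℝ) (hα : α < (m : ℝ) * (n : ℝ)) (hq0 : 0 < q) (hp : 1 < (m : ℝ) * q)
    (hq : q = (n : ℝ) / ((m : ℝ) * (n : ℝ) - α))
    (u : Fin m → ESp n → ℝ) (v : ESp n → ℝ)
    (hu : ∀ i, IsWeight (u i)) (hv : IsWeight v)
    (hA1 : ∀ i, IsA1 (fun x => u i x ^ ((m : ℝ) * q)))
    (hAi : IsAinfty (fun x => v x ^ ((m : ℝ) * q)))
    (r : ℝ) (hr : 1 < r) (F : (i : Fin m) → ℕ → ESp n → ℝ) (hF : ∀ i k, Measurable (F i k)) :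
    ∃ C : ℝ≥0∞, 0 < C ∧ C < ⊤ ∧
      wnorm (fun x => (∑' k : Fin m → ℕ,
            (ENNReal.ofReal |multiIα α (fun i => F i (k i)) x| /
              ENNReal.ofReal (v x)) ^ r) ^ (1 / r)) q
          (fun x => (∏ i, u i x ^ q) * v x ^ q)
        ≤ C * ∏ i, ∫⁻ x,
            (∑' k : ℕ, ENNReal.ofReal (|F i k x| ^ r)) ^ (1 / r) *
              ENNReal.ofReal (u i x) := by
  have hm' : (0 : ℝ) < m := by exact_mod_cast hm
  have hm1 : (1 : ℝ) ≤ m := by exact_mod_cast hm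
  have hp0 : 0 < (m : ℝ) * q := by positivity
  have hum := fun i => (hu i).1
  have hvm := hv.1
  have hu0 := fun i => (hu i).2.1
  have hv0 := hv.2.1
  have hup := fun i => (hu i).2.2.1
  have hvp := hv.2.2.1
  have hWex : ∀ i, ∃ C, A1p (fun x => ENNReal.ofReal (u i x ^ ((m : ℝ) * q))) C := fun i =>
    A1p.of_IsA1 ((hum i).pow_const _) ((hup i).mono fun x hx => Real.rpow_pos_of_pos hx _) (hA1 i)
  choose C1 hW using hWex
  obtain ⟨P, C2, hV⟩ := APc.of_IsAinfty (hvm.pow_const ((m : ℝ) * q))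
    (hvp.mono fun x hx => Real.rpow_pos_of_pos hx _) hAi
  set W : Fin m → ESp n → ℝ≥0∞ := fun i x => ENNReal.ofReal (u i x ^ ((m : ℝ) * q)) with hWdef
  set V : ESp n → ℝ≥0∞ := fun x => ENNReal.ofReal (v x ^ ((m : ℝ) * q)) with hVdef
  have hWm : ∀ i, Measurable (W i) := fun i => (hW i).meas
  have hVm : Measurable V := hV.meas
  have hWr : ∀ i x, W i x ^ ((m : ℝ)⁻¹) = ENNReal.ofReal (u i x ^ q) := fun i x => vv_pow_root (hu0 i x) hm
  have hVr : ∀ x, V x ^ ((m : ℝ)⁻¹) = ENNReal.ofReal (v x ^ q) := fun x => vv_pow_root (hv0 x) hm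
  have hDe : ∀ x, ENNReal.ofReal ((∏ i, u i x ^ q) * v x ^ q) = (∏ i, W i x ^ ((m : ℝ)⁻¹)) * V x ^ ((m : ℝ)⁻¹) := by
    intro x
    rw [ENNReal.ofReal_mul (Finset.prod_nonneg fun i _ => Real.rpow_nonneg (hu0 i x) _),
      ENNReal.ofReal_prod_of_nonneg (fun i _ => Real.rpow_nonneg (hu0 i x) _), hVr]
    simp only [hWr]
  set Z : Fin m → ESp n → ℝ≥0∞ := fun i x => ∏ j, Function.update W i V j x ^ ((m : ℝ)⁻¹) with hZdef
  have hZ : ∀ i, APc (Z i) P (∏ j, Function.update C1 i C2 j ^ ((m : ℝ)⁻¹)) := by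
    intro i
    apply APc.geom hm
    intro j
    by_cases hji : j = i
    · subst hji; simpa using hV
    · simpa [hji] using (hW j).toAPc hV.hP
  have hZe : ∀ i x, W i x ^ ((m : ℝ)⁻¹) * Z i x = (∏ i, W i x ^ ((m : ℝ)⁻¹)) * V x ^ ((m : ℝ)⁻¹) := by
    intro i x
    have h1 : Z i x = V x ^ ((m : ℝ)⁻¹) * ∏ j ∈ Finset.univ.erase i, W j x ^ ((m : ℝ)⁻¹) := by
      rw [hZdef]
      simp only
      rw [← Finset.mul_prod_erase Finset.univ _ (Finset.mem_univ i)]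
      congr 1
      · simp
      · apply Finset.prod_congr rfl
        intro j hj
        rw [Function.update_of_ne (Finset.ne_of_mem_erase hj)]
    rw [h1, ← Finset.mul_prod_erase Finset.univ (fun j => W j x ^ ((m : ℝ)⁻¹)) (Finset.mem_univ i)]
    ring
  set θ : ℝ := 1 - (m : ℝ)⁻¹ with hθ
  have hθ0 : 0 ≤ θ := by rw [hθ]; have := inv_le_one_of_one_le₀ hm1; linarith
  have hθ1 : θ ≤ 1 := by rw [hθ]; have : 0 < (m : ℝ)⁻¹ := by positivity
                         linarith
  have h1θ : 1 - θ = (m : ℝ)⁻¹ := by rw [hθ]; ring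
  have htest := fun i => vv_test_two hn (hW i) (hZ i).toAPp hθ0 hθ1 hp0
  choose A hA htest using htest
  have hWpos : ∀ᵐ x ∂(volume : Measure (ESp n)), ∀ i, W i x ≠ 0 := ae_all_iff.2 fun i => (hW i).pos
  have hWt : ∀ i x, W i x ≠ ⊤ := fun i x => (hW i).fin x
  have hVt : ∀ x, V x ≠ ⊤ := fun x => ENNReal.ofReal_ne_top
  refine vv_main hm α q hq0 hp u v hum hvm hvp
    (fun i x y => ENNReal.ofReal (dist x y) ^ (-((n : ℝ) / ((m : ℝ) * q))) * W i y ^ (-(1 / ((m : ℝ) * q)))) ?_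
    (fun i x => (Z i x * W i x ^ (-θ)) ^ (1 / ((m : ℝ) * q))) ?_ ?_ ?_ A hA ?_ 1 one_ne_zero one_ne_top ?_ r hr F hF
  · intro i
    have h2 := hWm i
    simp only [Function.uncurry_def]
    exact (((measurable_fst.dist measurable_snd).ennreal_ofReal).pow_const _).mul ((h2.comp measurable_snd).pow_const _)
  · intro i
    exact (((hZ i).meas).mul ((hWm i).pow_const _)).pow_const _
  · intro i
    filter_upwards [(hZ i).pos, (hZ i).fin, (hW i).pos] with x h1 h2 h3
    have h4 := hWt i x
    have h5 := vv_rpow_ne h3 h4 (-θ)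
    exact vv_rpow_ne (mul_ne_zero h1 h5.1) (ENNReal.mul_ne_top h2 h5.2) _
  · filter_upwards [hWpos] with x hx
    have hNm : (∏ i, W i x ^ ((m : ℝ)⁻¹)) ^ m = ∏ i, W i x := by
      rw [← Finset.prod_pow]
      apply Finset.prod_congr rfl
      intro i _
      rw [← ENNReal.rpow_natCast, ← ENNReal.rpow_mul, inv_mul_cancel₀ hm'.ne', ENNReal.rpow_one]
    have hVmm : (V x ^ ((m : ℝ)⁻¹)) ^ m = V x := by
      rw [← ENNReal.rpow_natCast, ← ENNReal.rpow_mul, inv_mul_cancel₀ hm'.ne', ENNReal.rpow_one]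
    have hz : ∀ i, Z i x * W i x ^ (-θ) = ((∏ i, W i x ^ ((m : ℝ)⁻¹)) * V x ^ ((m : ℝ)⁻¹)) * (W i x)⁻¹ := by
      intro i
      rw [← hZe i x]
      have : W i x ^ (-θ) = W i x ^ ((m : ℝ)⁻¹) * (W i x)⁻¹ := by
        rw [← ENNReal.rpow_neg_one, ← ENNReal.rpow_add _ _ (hx i) (hWt i x)]
        congr 1; rw [hθ]; ring
      rw [this]; ring
    simp only [hz]
    rw [ENNReal.prod_rpow_of_nonneg (by positivity), Finset.prod_mul_distrib, Finset.prod_const, Finset.card_univ, Fintype.card_fin,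
      mul_pow, hNm, hVmm]
    have : (∏ i, W i x) * V x * ∏ i, (W i x)⁻¹ = V x := by
      calc _ = (∏ i, W i x * (W i x)⁻¹) * V x := by rw [Finset.prod_mul_distrib]; ring
        _ = _ := by
          rw [Finset.prod_eq_one, one_mul]
          intro i _
          exact ENNReal.mul_inv_cancel (hx i) (hWt i x)
    rw [this, hVdef]
    simp only
    rw [ENNReal.ofReal_rpow_of_nonneg (Real.rpow_nonneg (hv0 x) _) (by positivity), ← Real.rpow_mul (hv0 x),
      mul_one_div_cancel hp0.ne', Real.rpow_one]
  · intro i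
    filter_upwards [htest i] with y hy
    have hfe : (fun x => ENNReal.ofReal ((∏ i, u i x ^ q) * v x ^ q)) = fun x => W i x ^ (1 - θ) * Z i x := by
      funext x
      rw [h1θ, hZe i, hDe]
    rw [hfe]
    exact hy
  · intro x
    filter_upwards [vv_ae_pi hup] with y hy
    rw [one_mul]
    have e0 : 0 < (m : ℝ) * n - α := by linarith
    have hn' : (0 : ℝ) < n := by exact_mod_cast hn
    set R := ∑ i, dist x (y i) with hR
    have hR0 : 0 ≤ R := Finset.sum_nonneg fun i _ => dist_nonneg
    rcases hR0.eq_or_lt with h0 | h0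
    · rw [← h0, Real.zero_rpow e0.ne']; simp
    · have hcan : ∀ i, ENNReal.ofReal (u i (y i)) * (ENNReal.ofReal (dist x (y i)) ^ (-((n : ℝ) / ((m : ℝ) * q))) *
          W i (y i) ^ (-(1 / ((m : ℝ) * q)))) = ENNReal.ofReal (dist x (y i)) ^ (-((n : ℝ) / ((m : ℝ) * q))) := by
        intro i
        have := vv_pow_cancel (hy i) hp0
        calc _ = ENNReal.ofReal (dist x (y i)) ^ (-((n : ℝ) / ((m : ℝ) * q))) *
            (ENNReal.ofReal (u i (y i)) * ENNReal.ofReal (u i (y i) ^ ((m : ℝ) * q)) ^ (-(1 / ((m : ℝ) * q)))) := by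
              rw [hWdef]; ring
          _ = _ := by rw [this, mul_one]
      simp only [hcan]
      calc ENNReal.ofReal (R ^ ((m : ℝ) * n - α))⁻¹ = ∏ _i : Fin m, ENNReal.ofReal R ^ (-((n : ℝ) / ((m : ℝ) * q))) := by
            rw [Finset.prod_const, Finset.card_univ, Fintype.card_fin, ← Real.rpow_neg hR0, ← ENNReal.rpow_natCast,
              ← ENNReal.rpow_mul, ENNReal.ofReal_rpow_of_pos h0]
            congr 2
            rw [hq]; field_simp
        _ ≤ _ := by
          apply Finset.prod_le_prod'
          intro i _
          rw [ENNReal.rpow_neg, ENNReal.rpow_neg]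
          apply ENNReal.inv_le_inv.2
          apply ENNReal.rpow_le_rpow _ (by positivity)
          apply ENNReal.ofReal_le_ofReal
          exact Finset.single_le_sum (f := fun i => dist x (y i)) (fun i _ => dist_nonneg) (Finset.mem_univ i)

theorem vv_A11 {n m : ℕ} {w : Fin m → ESp n → ℝ}
    (hwp : ∀ i, ∀ᵐ x ∂(volume : Measure (ESp n)), 0 < w i x) (h : A11 w) :
    ∃ C : ℝ≥0∞, C ≠ ⊤ ∧ ∀ x r, 0 < r → ∃ good : Fin m → ESp n → Prop,
      (∀ i, ∀ᵐ z ∂(volume : Measure (ESp n)), good i z) ∧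
      ∀ z : Fin m → ESp n, (∀ i, good i (z i) ∧ z i ∈ Qc x r) →
        wd (fun x => ENNReal.ofReal (∏ i, w i x ^ ((m : ℝ)⁻¹))) (Qc x r) ^ m ≤
          C * volume (Qc x r) ^ m * ∏ i, ENNReal.ofReal (w i (z i)) := by
  obtain ⟨C, hC, h⟩ := h
  refine ⟨C, hC.ne, fun x r hr => ?_⟩
  refine ⟨fun i z => (z ∈ Qc x r → essInf (fun x => ENNReal.ofReal (w i x)) (volume.restrict (Qc x r)) ≤ ENNReal.ofReal (w i z)) ∧
    0 < w i z, fun i => ?_, fun z hz => ?_⟩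
  · filter_upwards [hwp i, ae_imp_of_ae_restrict (ae_essInf_le (μ := volume.restrict (Qc x r)) (f := fun x => ENNReal.ofReal (w i x)))] with z h1 h2
    exact ⟨h2, h1⟩
  · have hV0 := Qc_vol_ne_zero x hr
    have hVt := Qc_vol_ne_top x hr
    have h1 := h _ (Qc_isCube x hr)
    rw [← withDensity_apply _ (Qc_meas x r), ENNReal.rpow_natCast] at h1
    have h2 : ∏ i, (ENNReal.ofReal (w i (z i)))⁻¹ ≤ ∏ i, (essInf (fun x => ENNReal.ofReal (w i x)) (volume.restrict (Qc x r)))⁻¹ := by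
      apply Finset.prod_le_prod'
      intro i _
      exact ENNReal.inv_le_inv.2 ((hz i).1.1 (hz i).2)
    have h3 : (∏ i, (ENNReal.ofReal (w i (z i)))⁻¹) * ∏ i, ENNReal.ofReal (w i (z i)) = 1 := by
      rw [← Finset.prod_mul_distrib, Finset.prod_eq_one]
      intro i _
      exact ENNReal.inv_mul_cancel (by simpa using (hz i).1.2) ENNReal.ofReal_ne_top
    have h4 := (mul_le_mul_right h2 _).trans h1
    change ((volume (Qc x r))⁻¹ * wd (fun x => ENNReal.ofReal (∏ i, w i x ^ ((m : ℝ)⁻¹))) (Qc x r)) ^ m * _ ≤ C at h4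
    generalize wd (fun x => ENNReal.ofReal (∏ i, w i x ^ ((m : ℝ)⁻¹))) (Qc x r) = X at *
    generalize volume (Qc x r) = V at *
    generalize ∏ i, (ENNReal.ofReal (w i (z i)))⁻¹ = B at *
    generalize ∏ i, ENNReal.ofReal (w i (z i)) = D at *
    calc X ^ m = (V⁻¹ * V) ^ m * X ^ m * (B * D) := by rw [h3, ENNReal.inv_mul_cancel hV0 hVt]; simp
      _ = ((V⁻¹ * X) ^ m * B) * (V ^ m * D) := by rw [mul_pow, mul_pow]; ring
      _ ≤ C * (V ^ m * D) := mul_le_mul_left h4 _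
      _ = _ := by ring

theorem vv_A11_A1p {n m : ℕ} (hm : 0 < m) {w : Fin m → ESp n → ℝ} (hwm : ∀ i, Measurable (w i)) (hw0 : ∀ i x, 0 ≤ w i x)
    (hwp : ∀ i, ∀ᵐ x ∂(volume : Measure (ESp n)), 0 < w i x) (h : A11 w) :
    ∃ C, A1p (fun x => ENNReal.ofReal (∏ i, w i x ^ ((m : ℝ)⁻¹))) C := by
  have hm' : (0 : ℝ) < m := by exact_mod_cast hm
  obtain ⟨C, hC, h⟩ := vv_A11 hwp h
  refine ⟨C ^ ((m : ℝ)⁻¹), ?_, ?_, fun z => ENNReal.ofReal_ne_top, ENNReal.rpow_ne_top_of_nonneg (by positivity) hC, ?_⟩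
  · exact (Finset.measurable_prod _ fun i _ => (hwm i).pow_const _).ennreal_ofReal
  · filter_upwards [ae_all_iff.2 hwp] with x hx
    have : 0 < ∏ i, w i x ^ ((m : ℝ)⁻¹) := Finset.prod_pos fun i _ => Real.rpow_pos_of_pos (hx i) _
    simpa using this
  · intro x r hr
    obtain ⟨good, hg, hz⟩ := h x r hr
    filter_upwards [ae_all_iff.2 hg] with z hgz hzQ
    have h1 := hz (fun _ => z) (fun i => ⟨hgz i, hzQ⟩)
    have h2 : ∏ i, ENNReal.ofReal (w i z) = ENNReal.ofReal (∏ i, w i z ^ ((m : ℝ)⁻¹)) ^ m := by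
      rw [ENNReal.ofReal_prod_of_nonneg (fun i _ => Real.rpow_nonneg (hw0 i z) _), ← Finset.prod_pow]
      apply Finset.prod_congr rfl
      intro i _
      rw [← ENNReal.ofReal_pow (Real.rpow_nonneg (hw0 i z) _), ← Real.rpow_natCast, ← Real.rpow_mul (hw0 i z),
        inv_mul_cancel₀ hm'.ne', Real.rpow_one]
    have h3 : C = (C ^ ((m : ℝ)⁻¹)) ^ m := by
      rw [← ENNReal.rpow_natCast, ← ENNReal.rpow_mul, inv_mul_cancel₀ hm'.ne', ENNReal.rpow_one]
    rw [h2] at h1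
    nth_rw 1 [h3] at h1
    rw [← mul_pow, ← mul_pow] at h1
    exact (ENNReal.pow_le_pow_left_iff hm.ne').1 h1

theorem vv_K_meas {n : ℕ} {W : ESp n → ℝ≥0∞} (hW : Measurable W) :
    Measurable (fun a : ESp n × ESp n => wd W (Qc a.2 (dist a.1 a.2))) := by
  have h1 : ∀ a : ESp n × ESp n, wd W (Qc a.2 (dist a.1 a.2)) =
      ∫⁻ z, {b : (ESp n × ESp n) × ESp n | ∀ i, |b.2 i - b.1.2 i| ≤ dist b.1.1 b.1.2}.indicator (fun b => W b.2) (a, z) := by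
    intro a
    rw [withDensity_apply _ (Qc_meas _ _), ← lintegral_indicator (Qc_meas _ _)]
    apply lintegral_congr
    intro z
    have : (z ∈ Qc a.2 (dist a.1 a.2)) ↔ ((a, z) ∈ {b : (ESp n × ESp n) × ESp n | ∀ i, |b.2 i - b.1.2 i| ≤ dist b.1.1 b.1.2}) := by
      exact Iff.rfl
    by_cases hz : z ∈ Qc a.2 (dist a.1 a.2)
    · rw [indicator_of_mem hz, indicator_of_mem (this.1 hz)]
    · rw [indicator_of_notMem hz, indicator_of_notMem (fun h => hz (this.2 h))]
  simp only [h1]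
  apply Measurable.lintegral_prod_right'
  apply Measurable.indicator (hW.comp measurable_snd)
  rw [Set.ofPred_forall]
  apply MeasurableSet.iInter
  intro i
  apply IsClosed.measurableSet
  apply isClosed_le <;> fun_prop

theorem vv_case_one {n m : ℕ} (hn : 0 < n) (hm : 0 < m)
    (α q : ℝ) (hα : α < (m : ℝ) * (n : ℝ)) (hq0 : 0 < q) (hp : 1 < (m : ℝ) * q)
    (hq : q = (n : ℝ) / ((m : ℝ) * (n : ℝ) - α))
    (u : Fin m → ESp n → ℝ) (v : ESp n → ℝ)
    (hu : ∀ i, IsWeight (u i)) (hv : IsWeight v)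
    (hA1 : A11 (fun i x => u i x ^ ((m : ℝ) * q)))
    (hAi : IsAinfty (fun x => (∏ i, u i x ^ q) * v x ^ q))
    (r : ℝ) (hr : 1 < r) (F : (i : Fin m) → ℕ → ESp n → ℝ) (hF : ∀ i k, Measurable (F i k)) :
    ∃ C : ℝ≥0∞, 0 < C ∧ C < ⊤ ∧
      wnorm (fun x => (∑' k : Fin m → ℕ,
            (ENNReal.ofReal |multiIα α (fun i => F i (k i)) x| /
              ENNReal.ofReal (v x)) ^ r) ^ (1 / r)) q
          (fun x => (∏ i, u i x ^ q) * v x ^ q)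
        ≤ C * ∏ i, ∫⁻ x,
            (∑' k : ℕ, ENNReal.ofReal (|F i k x| ^ r)) ^ (1 / r) *
              ENNReal.ofReal (u i x) := by
  have hm' : (0 : ℝ) < m := by exact_mod_cast hm
  have hp0 : 0 < (m : ℝ) * q := by positivity
  have hum := fun i => (hu i).1
  have hvm := hv.1
  have hu0 := fun i => (hu i).2.1
  have hv0 := hv.2.1
  have hup := fun i => (hu i).2.2.1
  have hvp := hv.2.2.1
  have hwp : ∀ i, ∀ᵐ x ∂(volume : Measure (ESp n)), 0 < u i x ^ ((m : ℝ) * q) :=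
    fun i => (hup i).mono fun x hx => Real.rpow_pos_of_pos hx _
  obtain ⟨C1, hW⟩ := vv_A11_A1p hm (fun i => (hum i).pow_const _) (fun i x => Real.rpow_nonneg (hu0 i x) _) hwp hA1
  obtain ⟨C, hC, hA⟩ := vv_A11 hwp hA1
  set W : ESp n → ℝ≥0∞ := fun x => ENNReal.ofReal (∏ i, (u i x ^ ((m : ℝ) * q)) ^ ((m : ℝ)⁻¹)) with hWdef
  have hWe : ∀ x, W x = ENNReal.ofReal (∏ i, u i x ^ q) := by
    intro x
    rw [hWdef]
    simp only
    congr 1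
    apply Finset.prod_congr rfl
    intro i _
    rw [← Real.rpow_mul (hu0 i x)]
    congr 1; field_simp
  obtain ⟨P, C2, hZ⟩ := APc.of_IsAinfty
    ((Finset.measurable_prod _ fun i _ => (hum i).pow_const q).mul (hvm.pow_const q))
    (by
      filter_upwards [ae_all_iff.2 hup, hvp] with x h1 h2
      exact mul_pos (Finset.prod_pos fun i _ => Real.rpow_pos_of_pos (h1 i) _) (Real.rpow_pos_of_pos h2 _)) hAi
  obtain ⟨A, hAt, htest⟩ := vv_test_one hn hW hZ.toAPp hp0
  set Z : ESp n → ℝ≥0∞ := fun x => ENNReal.ofReal ((∏ i, u i x ^ q) * v x ^ q) with hZdef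
  have hWm : Measurable W := hW.meas
  have hZe : ∀ x, Z x = W x * ENNReal.ofReal (v x ^ q) := by
    intro x
    rw [hWe, ← ENNReal.ofReal_mul (Finset.prod_nonneg fun i _ => Real.rpow_nonneg (hu0 i x) _)]
  have e0 : 0 < (m : ℝ) * n - α := by linarith
  have hn' : (0 : ℝ) < n := by exact_mod_cast hn
  refine vv_main hm α q hq0 hp u v hum hvm hvp
    (fun i x y => wd W (Qc y (dist x y)) ^ (-(1 / ((m : ℝ) * q)))) ?_
    (fun i x => (Z x * W x ^ (-1 : ℝ)) ^ (1 / ((m : ℝ) * q))) ?_ ?_ ?_ (fun _ => A) (fun _ => hAt)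
    (fun i => Filter.Eventually.of_forall htest)
    ((C + 1) ^ (1 / ((m : ℝ) * q)) * ENNReal.ofReal 8 ^ ((m : ℝ) * n - α)) ?_ ?_ ?_ r hr F hF
  · intro i
    exact (vv_K_meas hWm).pow_const _
  · intro i
    exact (hZ.meas.mul (hWm.pow_const _)).pow_const _
  · intro i
    filter_upwards [hZ.pos, hZ.fin, hW.pos] with x h1 h2 h3
    have h5 := vv_rpow_ne h3 (hW.fin x) (-1)
    exact vv_rpow_ne (mul_ne_zero h1 h5.1) (ENNReal.mul_ne_top h2 h5.2) _
  · filter_upwards [hW.pos] with x hx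
    have hxt := hW.fin x
    rw [Finset.prod_const, Finset.card_univ, Fintype.card_fin, hZe x, ENNReal.rpow_neg_one]
    have h1 : W x * ENNReal.ofReal (v x ^ q) * (W x)⁻¹ = ENNReal.ofReal (v x ^ q) := by
      rw [mul_comm (W x), mul_assoc, ENNReal.mul_inv_cancel hx hxt, mul_one]
    rw [h1, ENNReal.ofReal_rpow_of_nonneg (Real.rpow_nonneg (hv0 x) _) (by positivity), ← Real.rpow_mul (hv0 x),
      ← ENNReal.ofReal_pow (Real.rpow_nonneg (hv0 x) _), ← Real.rpow_natCast, ← Real.rpow_mul (hv0 x)]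
    have : q * (1 / ((m : ℝ) * q)) * m = 1 := by field_simp
    rw [this, Real.rpow_one]
  · apply mul_ne_zero
    · exact (vv_rpow_ne (by simp) (by finiteness) _).1
    · exact (vv_rpow_ne (by simp) (by finiteness) _).1
  · apply ENNReal.mul_ne_top
    · exact (vv_rpow_ne (by simp) (by finiteness) _).2
    · exact (vv_rpow_ne (by simp) (by finiteness) _).2
  · intro x
    have hA2 := fun k : ℤ => hA x (2 ^ k) (by positivity)
    choose good hgood hA2 using hA2
    have hall : ∀ᵐ y : Fin m → ESp n, ∀ k : ℤ, ∀ i, good k i (y i) := ae_all_iff.2 fun k => vv_ae_pi (hgood k)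
    filter_upwards [hall, vv_ae_pi hup] with y hgy hy
    set R := ∑ i, dist x (y i) with hR
    have hR0 : 0 ≤ R := Finset.sum_nonneg fun i _ => dist_nonneg
    rcases hR0.eq_or_lt with h0 | h0
    · rw [← h0, Real.zero_rpow e0.ne']; simp
    have hdR : ∀ i, dist x (y i) ≤ R := fun i =>
      Finset.single_le_sum (f := fun i => dist x (y i)) (fun i _ => dist_nonneg) (Finset.mem_univ i)
    obtain ⟨k, hk1, hk2⟩ := exists_mem_Ico_zpow (show 0 < 2 * R by positivity) (one_lt_two (α := ℝ))
    have hkp : (0 : ℝ) < 2 ^ (k + 1) := by positivity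
    have hk3 : (2 : ℝ) ^ (k + 1) = 2 ^ k * 2 := zpow_add_one₀ (by norm_num) k
    have hyQ : ∀ i, y i ∈ Qc x (dist x (y i)) := fun i => mem_Qc_of_dist (dist_comm _ _).le
    have hsub : ∀ i, Qc (y i) (dist x (y i)) ⊆ Qc x (2 ^ (k + 1)) := fun i =>
      Qc_subset (hyQ i) (by have := hdR i; linarith)
    have hmain := hA2 (k + 1) y fun i => ⟨hgy _ i, Qc_mono x (by have := hdR i; linarith) (hyQ i)⟩
    have hX0 : wd W (Qc x (2 ^ (k + 1))) ≠ 0 := wd_pos hW.meas hW.pos (Qc_meas _ _) (Qc_vol_ne_zero x hkp)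
    have hXt : wd W (Qc x (2 ^ (k + 1))) ≠ ⊤ := hW.wd_fin x hkp
    have hV : volume (Qc x (2 ^ (k + 1))) ≤ (ENNReal.ofReal 8 * ENNReal.ofReal R) ^ n := by
      rw [Qc_vol x hkp.le, ← ENNReal.ofReal_mul (by norm_num)]
      refine pow_le_pow_left' (ENNReal.ofReal_le_ofReal ?_) n
      rw [hk3]; linarith
    have hKX : ∀ i, wd W (Qc x (2 ^ (k + 1))) ^ (-(1 / ((m : ℝ) * q))) ≤ wd W (Qc (y i) (dist x (y i))) ^ (-(1 / ((m : ℝ) * q))) := by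
      intro i
      rw [ENNReal.rpow_neg, ENNReal.rpow_neg]
      apply ENNReal.inv_le_inv.2
      apply ENNReal.rpow_le_rpow _ (by positivity)
      exact measure_mono (hsub i)
    set X := wd W (Qc x (2 ^ (k + 1))) with hX
    have hp1 : 0 ≤ 1 / ((m : ℝ) * q) := by positivity
    have hR0' : ENNReal.ofReal R ≠ 0 := by simpa using h0
    have h1 : X ^ m ≤ (C + 1) * ((ENNReal.ofReal 8 * ENNReal.ofReal R) ^ n) ^ m * ∏ i, ENNReal.ofReal (u i (y i) ^ ((m : ℝ) * q)) := by
      refine hmain.trans ?_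
      refine mul_le_mul_left ?_ _
      exact mul_le_mul' le_self_add (pow_le_pow_left' hV m)
    have h2 := ENNReal.rpow_le_rpow h1 hp1
    rw [ENNReal.mul_rpow_of_nonneg _ _ hp1, ENNReal.mul_rpow_of_nonneg _ _ hp1] at h2
    have h3 : (((ENNReal.ofReal 8 * ENNReal.ofReal R) ^ n) ^ m) ^ (1 / ((m : ℝ) * q)) =
        ENNReal.ofReal 8 ^ ((m : ℝ) * n - α) * ENNReal.ofReal R ^ ((m : ℝ) * n - α) := by
      rw [← ENNReal.mul_rpow_of_nonneg _ _ e0.le, ← pow_mul, ← ENNReal.rpow_natCast, ← ENNReal.rpow_mul]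
      congr 1
      push_cast
      rw [hq]; field_simp
    have h4 : (∏ i, ENNReal.ofReal (u i (y i) ^ ((m : ℝ) * q))) ^ (1 / ((m : ℝ) * q)) = ∏ i, ENNReal.ofReal (u i (y i)) := by
      rw [← ENNReal.prod_rpow_of_nonneg hp1]
      apply Finset.prod_congr rfl
      intro i _
      rw [ENNReal.ofReal_rpow_of_nonneg (Real.rpow_nonneg (hu0 i _) _) hp1, ← Real.rpow_mul (hu0 i _),
        mul_one_div_cancel hp0.ne', Real.rpow_one]
    have h5 : (X ^ m) ^ (1 / ((m : ℝ) * q)) * (X ^ (-(1 / ((m : ℝ) * q)))) ^ m = 1 := by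
      rw [← ENNReal.rpow_natCast, ← ENNReal.rpow_natCast, ← ENNReal.rpow_mul, ← ENNReal.rpow_mul, ← ENNReal.rpow_add _ _ hX0 hXt]
      ring_nf
      simp
    have h6 : ENNReal.ofReal R ^ ((m : ℝ) * n - α) * ENNReal.ofReal R ^ (-((m : ℝ) * n - α)) = 1 := by
      rw [← ENNReal.rpow_add _ _ hR0' ENNReal.ofReal_ne_top]; simp
    rw [h3, h4] at h2
    have h7 : ENNReal.ofReal (R ^ ((m : ℝ) * n - α))⁻¹ = ENNReal.ofReal R ^ (-((m : ℝ) * n - α)) := by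
      rw [← Real.rpow_neg hR0, ENNReal.ofReal_rpow_of_pos h0]
    rw [h7]
    generalize ENNReal.ofReal R ^ ((m : ℝ) * n - α) = a at *
    generalize ENNReal.ofReal R ^ (-((m : ℝ) * n - α)) = b at *
    generalize ENNReal.ofReal 8 ^ ((m : ℝ) * n - α) = c8 at *
    generalize (C + 1) ^ (1 / ((m : ℝ) * q)) = c1 at *
    generalize X ^ (-(1 / ((m : ℝ) * q))) = ξ at *
    generalize (X ^ m) ^ (1 / ((m : ℝ) * q)) = η at *
    calc b = η * ξ ^ m * b := by rw [h5, one_mul]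
      _ ≤ (c1 * (c8 * a) * ∏ i, ENNReal.ofReal (u i (y i))) * ξ ^ m * b :=
          mul_le_mul_left (mul_le_mul_left h2 _) _
      _ = (a * b) * (c1 * c8) * ((∏ i, ENNReal.ofReal (u i (y i))) * ξ ^ m) := by ring
      _ = (c1 * c8) * ∏ i, (ENNReal.ofReal (u i (y i)) * ξ) := by
          rw [h6, one_mul, Finset.prod_mul_distrib, Finset.prod_const, Finset.card_univ, Fintype.card_fin]
      _ ≤ _ := by
          apply mul_le_mul_right
          apply Finset.prod_le_prod'
          intro i _
          exact mul_le_mul_right (hKX i) _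

/-- **Vector-valued mixed weak-type inequality for `𝓘_α`.**  Under the weight
hypotheses of the main theorem, with `S(f⃗) = 𝓘_α(f⃗)/v` and suitable `r`, for countable
families `{f^i_{k}}_k ⊂ L¹(uᵢ)` there is `C > 0` with
`‖(∑_{k⃗} |S(f¹_{k₁},…,f^m_{k_m})|^r)^{1/r}‖_{L^{q,∞}(ν v^q)}
  ≤ C ∏ᵢ ‖(∑_k |f^i_k|^r)^{1/r}‖_{L¹(uᵢ)}`. -/
theorem vector_valued_mixed_Ialpha {n m : ℕ} (hn : 0 < n) (hm : 0 < m)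
    (α q : ℝ) (hα0 : 0 < α) (hα : α < (m : ℝ) * (n : ℝ))
    (hq : q = (n : ℝ) / ((m : ℝ) * (n : ℝ) - α))
    (u : Fin m → ESp n → ℝ) (v : ESp n → ℝ)
    (hu : ∀ i, IsWeight (u i)) (hv : IsWeight v)
    (hyp : (A11 (fun i x => u i x ^ ((m : ℝ) * q)) ∧
              IsAinfty (fun x => (∏ i, u i x ^ q) * v x ^ q))
         ∨ ((∀ i, IsA1 (fun x => u i x ^ ((m : ℝ) * q))) ∧
              IsAinfty (fun x => v x ^ ((m : ℝ) * q))))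
    (r : ℝ) (hr : (q < r ∧ 1 < r ∧ r < 2) ∨ r = 2)
    (F : (i : Fin m) → ℕ → ESp n → ℝ)
    (hFmeas : ∀ i k, Measurable (F i k))
    (hFL1 : ∀ i k, L1norm (F i k) (u i) < ⊤) :
    ∃ C : ℝ≥0∞, 0 < C ∧ C < ⊤ ∧
      wnorm (fun x => (∑' k : Fin m → ℕ,
            (ENNReal.ofReal |multiIα α (fun i => F i (k i)) x| /
              ENNReal.ofReal (v x)) ^ r) ^ (1 / r)) q
          (fun x => (∏ i, u i x ^ q) * v x ^ q)
        ≤ C * ∏ i, ∫⁻ x,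
            (∑' k : ℕ, ENNReal.ofReal (|F i k x| ^ r)) ^ (1 / r) *
              ENNReal.ofReal (u i x) := by
  have hm' : (0 : ℝ) < m := by exact_mod_cast hm
  have hn' : (0 : ℝ) < n := by exact_mod_cast hn
  have e0 : 0 < (m : ℝ) * n - α := by linarith
  have hq0 : 0 < q := by rw [hq]; positivity
  have hp : 1 < (m : ℝ) * q := by
    rw [hq, ← mul_div_assoc, one_lt_div e0]
    linarith
  have hr1 : 1 < r := by
    rcases hr with h | h
    · exact h.2.1
    · rw [h]; norm_num
  rcases hyp with h | h
  · exact vv_case_one hn hm α q hα hq0 hp hq u v hu hv h.1 h.2 r hr1 F hFmeas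
  · exact vv_case_two hn hm α q hα hq0 hp hq u v hu hv h.1 h.2 r hr1 F hFmeas

end
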